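/- For every α with 0 < α < 1 there exists a function f ∈ C^{1+α}[0,1] (i.e., f is differentiable and f' is Hölder continuous with exponent α) such that for every set A ⊆ [0,1] with upper box dimension greater than α, the restriction of f to A is neither convex nor concave. -/

import Mathlib

open Set MeasureTheory Filter

/-- Number of `N`-adic grid intervals `[(j-1)/N^k, j/N^k]` meeting `A`. -/
noncomputable def gridCount (N k : ℕ) (A : Set ℝ) : ℕ :=
  {j : ℕ | 1 ≤ j ∧ j ≤ N ^ k ∧
    (A ∩ Set.Icc (((j : ℝ) - 1) / (N : ℝ) ^ k) ((j : ℝ) / (N : ℝ) ^ k)).Nonempty}.ncard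

/-- Upper box (Minkowski) dimension, via dyadic grid counts. -/
noncomputable def ubDim (A : Set ℝ) : ℝ :=
  Filter.limsup (fun k : ℕ => Real.log (gridCount 2 k A) / (k * Real.log 2)) Filter.atTop

/-- `f` restricted to `A` is convex: it agrees on `A` with a function convex on the convex hull. -/
def ConvexRestr (f : ℝ → ℝ) (A : Set ℝ) : Prop :=
  ∃ h : ℝ → ℝ, ConvexOn ℝ (convexHull ℝ A) h ∧ Set.EqOn f h A

/-- `f` restricted to `A` is concave. -/
def ConcaveRestr (f : ℝ → ℝ) (A : Set ℝ) : Prop :=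
  ∃ h : ℝ → ℝ, ConcaveOn ℝ (convexHull ℝ A) h ∧ Set.EqOn f h A

namespace Rough

/-- A smooth bump with plateau `[0,1]` and support in `[-1,2]`. -/
theorem exists_bump : ∃ (ψ ψ' : ℝ → ℝ) (C : ℝ), 1 ≤ C ∧ (∀ x, HasDerivAt ψ (ψ' x) x) ∧
    (∀ x, |ψ x| ≤ C) ∧ (∀ x, |ψ' x| ≤ C) ∧ (∀ x y, |ψ' x - ψ' y| ≤ C * |x - y|) ∧
    (∀ x, 0 ≤ x → x ≤ 1 → ψ x = 1 ∧ ψ' x = 0) ∧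
    (∀ x, x ≤ -1 ∨ 2 ≤ x → ψ x = 0 ∧ ψ' x = 0) := by
  set ψ : ℝ → ℝ := fun x => Real.smoothTransition (x + 1) * Real.smoothTransition (2 - x) with hψ
  have hsm : ContDiff ℝ 2 ψ := by
    apply ContDiff.mul
    · exact (Real.smoothTransition.contDiff (n := 2)).comp (contDiff_id.add contDiff_const)
    · exact (Real.smoothTransition.contDiff (n := 2)).comp (contDiff_const.sub contDiff_id)
  have h0 : ∀ x, 0 ≤ ψ x := fun x =>
    mul_nonneg (Real.smoothTransition.nonneg _) (Real.smoothTransition.nonneg _)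
  have h1 : ∀ x, ψ x ≤ 1 := fun x =>
    mul_le_one₀ (Real.smoothTransition.le_one _) (Real.smoothTransition.nonneg _)
      (Real.smoothTransition.le_one _)
  have hp : ∀ x, 0 ≤ x → x ≤ 1 → ψ x = 1 := by
    intro x a b
    simp only [hψ]
    rw [Real.smoothTransition.one_of_one_le (by linarith),
      Real.smoothTransition.one_of_one_le (by linarith), one_mul]
  have hz : ∀ x, x ≤ -1 ∨ 2 ≤ x → ψ x = 0 := by
    intro x h
    simp only [hψ]
    rcases h with h | h
    · rw [Real.smoothTransition.zero_of_nonpos (by linarith), zero_mul]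
    · rw [Real.smoothTransition.zero_of_nonpos (x := 2 - x) (by linarith), mul_zero]
  have hcs : HasCompactSupport ψ := by
    apply HasCompactSupport.intro (K := Icc (-1) 2) isCompact_Icc
    intro x hx
    apply hz
    by_contra hc
    push Not at hc
    exact hx ⟨hc.1.le, hc.2.le⟩
  have hd1 : ContDiff ℝ 1 (deriv ψ) := by
    have : ContDiff ℝ (1 + 1) ψ := by norm_num; exact hsm
    exact (contDiff_succ_iff_deriv.1 this).2.2
  have hcs' : HasCompactSupport (deriv ψ) := hcs.deriv
  obtain ⟨C1, hC1⟩ := hd1.continuous.bounded_above_of_compact_support hcs'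
  obtain ⟨C2, hC2⟩ := hd1.lipschitzWith_of_hasCompactSupport hcs' (by norm_num)
  refine ⟨ψ, deriv ψ, max 1 (max C1 C2), le_max_left _ _, ?_, ?_, ?_, ?_, ?_, ?_⟩
  · intro x
    exact (hsm.differentiable (by norm_num) x).hasDerivAt
  · intro x
    rw [abs_of_nonneg (h0 x)]
    exact (h1 x).trans (le_max_left _ _)
  · intro x
    exact (hC1 x).trans ((le_max_left _ _).trans (le_max_right _ _))
  · intro x y
    have := hC2.dist_le_mul x y
    rw [Real.dist_eq, Real.dist_eq] at this
    refine this.trans ?_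
    gcongr
    exact (le_max_right _ _).trans (le_max_right _ _)
  · intro x a b
    refine ⟨hp x a b, ?_⟩
    apply IsLocalMax.deriv_eq_zero
    filter_upwards with y
    rw [hp x a b]; exact h1 y
  · intro x h
    refine ⟨hz x h, ?_⟩
    apply IsLocalMin.deriv_eq_zero
    filter_upwards with y
    rw [hz x h]; exact h0 y

theorem card_near (N : ℕ) (y : ℝ) :
    ((Finset.range N).filter (fun i : ℕ => -1 < y - i ∧ y - i < 2)).card ≤ 3 := by
  have : (((Finset.range N).filter (fun i : ℕ => -1 < y - i ∧ y - i < 2)).image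
      (fun i : ℕ => (i : ℤ))) ⊆ Finset.Icc (⌊y⌋ - 1) (⌊y⌋ + 1) := by
    intro z hz
    simp only [Finset.mem_image, Finset.mem_filter] at hz
    obtain ⟨i, ⟨_, h1, h2⟩, rfl⟩ := hz
    have a := Int.floor_le y
    have b := Int.lt_floor_add_one y
    rw [Finset.mem_Icc]
    constructor
    · have : ((⌊y⌋ : ℤ) : ℝ) < (((i : ℤ) + 2 : ℤ) : ℝ) := by push_cast; linarith
      have := Int.cast_lt.1 this
      omega
    · have : (((i : ℤ)) : ℝ) < ((⌊y⌋ + 2 : ℤ) : ℝ) := by push_cast; linarith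
      have := Int.cast_lt.1 this
      omega
  have h := Finset.card_le_card this
  rw [Finset.card_image_of_injective _ Nat.cast_injective, Int.card_Icc] at h
  omega

theorem sum_near (N : ℕ) (y : ℝ) (c : ℕ → ℝ) (C : ℝ) (hC : 0 ≤ C) (hc : ∀ i, |c i| ≤ C)
    (hz : ∀ i : ℕ, ¬ (-1 < y - i ∧ y - i < 2) → c i = 0) :
    |∑ i ∈ Finset.range N, c i| ≤ 3 * C := by
  have : ∑ i ∈ Finset.range N, c i =
      ∑ i ∈ (Finset.range N).filter (fun i : ℕ => -1 < y - i ∧ y - i < 2), c i := by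
    rw [Finset.sum_filter]
    apply Finset.sum_congr rfl
    intro i _
    split_ifs with h
    · rfl
    · exact hz i h
  rw [this]
  refine (Finset.abs_sum_le_sum_abs _ _).trans ?_
  refine (Finset.sum_le_card_nsmul _ _ C (fun i _ => hc i)).trans ?_
  rw [nsmul_eq_mul]
  have := card_near N y
  have : (((Finset.range N).filter (fun i : ℕ => -1 < y - i ∧ y - i < 2)).card : ℝ) ≤ 3 := by
    exact_mod_cast this
  gcongr

/-- The properties of the superposition of bumps that are used later. -/
structure Bump (ψ ψ' : ℝ → ℝ) (B : ℝ) : Prop where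
  one_le : 1 ≤ B
  der : ∀ x, HasDerivAt ψ (ψ' x) x
  plat : ∀ x, 0 ≤ x → x ≤ 1 → ψ x = 1 ∧ ψ' x = 0
  supp : ∀ x, x ≤ -1 ∨ 2 ≤ x → ψ x = 0 ∧ ψ' x = 0
  bd : ∀ (N : ℕ) (a : ℕ → ℝ), (∀ i, |a i| ≤ 1) → ∀ y,
    |∑ i ∈ Finset.range N, a i * ψ (y - i)| ≤ B
  bd' : ∀ (N : ℕ) (a : ℕ → ℝ), (∀ i, |a i| ≤ 1) → ∀ y,
    |∑ i ∈ Finset.range N, a i * ψ' (y - i)| ≤ B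
  lip : ∀ (N : ℕ) (a : ℕ → ℝ), (∀ i, |a i| ≤ 1) → ∀ y z,
    |∑ i ∈ Finset.range N, a i * ψ' (y - i) - ∑ i ∈ Finset.range N, a i * ψ' (z - i)|
      ≤ B * |y - z|

theorem exists_Bump : ∃ ψ ψ' B, Bump ψ ψ' B := by
  obtain ⟨ψ, ψ', C, hC, hd, hb, hb', hl, hp, hz⟩ := exists_bump
  have hsup : ∀ x, ¬ (-1 < x ∧ x < 2) → ψ x = 0 ∧ ψ' x = 0 := by
    intro x hx
    apply hz
    by_contra hc
    push Not at hc
    exact hx hc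
  refine ⟨ψ, ψ', 6 * C, ⟨by linarith, hd, hp, hz, ?_, ?_, ?_⟩⟩
  · intro N a ha y
    refine (sum_near N y _ C (by linarith) ?_ ?_).trans (by linarith)
    · intro i
      rw [abs_mul]
      calc |a i| * |ψ (y - i)| ≤ 1 * C := by gcongr; exacts [ha i, hb _]
        _ = C := one_mul _
    · intro i h
      rw [(hsup _ h).1, mul_zero]
  · intro N a ha y
    refine (sum_near N y _ C (by linarith) ?_ ?_).trans (by linarith)
    · intro i
      rw [abs_mul]
      calc |a i| * |ψ' (y - i)| ≤ 1 * C := by gcongr; exacts [ha i, hb' _]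
        _ = C := one_mul _
    · intro i h
      rw [(hsup _ h).2, mul_zero]
  · intro N a ha y z
    have key : ∀ i : ℕ, |a i * ψ' (y - i) - a i * ψ' (z - i)| ≤ C * |y - z| := by
      intro i
      rw [← mul_sub, abs_mul]
      calc |a i| * |ψ' (y - i) - ψ' (z - i)| ≤ 1 * (C * |(y - i) - (z - i)|) := by
            gcongr; exacts [ha i, hl _ _]
        _ = C * |y - z| := by rw [one_mul]; congr 2; ring
    have hn : 0 ≤ C * |y - z| := by positivity
    rw [← Finset.sum_sub_distrib]
    set c : ℕ → ℝ := fun i => a i * ψ' (y - i) - a i * ψ' (z - i) with hcdef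
    have split : ∀ i ∈ Finset.range N, c i =
        (if (-1 < y - i ∧ y - i < 2) then c i else 0) +
        (if (-1 < z - i ∧ z - i < 2) then (if (-1 < y - i ∧ y - i < 2) then 0 else c i) else 0) := by
      intro i _
      by_cases h1 : (-1 < y - i ∧ y - i < 2)
      · simp only [if_pos h1, ite_self, add_zero]
      · by_cases h2 : (-1 < z - i ∧ z - i < 2)
        · simp only [if_neg h1, if_pos h2, zero_add]
        · simp only [if_neg h1, if_neg h2, hcdef, (hsup _ h1).2, (hsup _ h2).2, mul_zero, sub_zero,
            add_zero]
    rw [Finset.sum_congr rfl split, Finset.sum_add_distrib]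
    refine (abs_add_le _ _).trans ?_
    have e1 := sum_near N y (fun i => if (-1 < y - i ∧ y - i < 2) then c i else 0) _ hn
      (by intro i; split_ifs; exacts [key i, by simpa using hn])
      (by intro i h; exact if_neg h)
    have e2 := sum_near N z (fun i => if (-1 < z - i ∧ z - i < 2) then
        (if (-1 < y - i ∧ y - i < 2) then 0 else c i) else 0) _ hn
      (by intro i; split_ifs; exacts [by simpa using hn, key i, by simpa using hn])
      (by intro i h; exact if_neg h)
    linarith

end Rough

namespace Rough

open Classical in
/-- Averaging lemma. -/
theorem comb (N K M : ℕ) (hM : 0 < M) (hK : K = 4 * M) (Gk : ℕ → Fin K → Prop)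
    (GS Js : Finset ℕ) (hJ : ∀ j ∈ Js, j / M < N + 1)
    (h1 : ∀ j k k', Gk j k → Gk j k' → k = k')
    (h2 : ∀ j ∈ Js, ∀ k, Gk j k → j / M ∈ GS) :
    ∑ κ : Fin (N + 1) → Fin K,
      Real.exp (((Js.filter (fun j => Gk j (κ (Fin.ofNat (N + 1) (j / M))))).card : ℝ) / M)
      ≤ (K : ℝ) ^ (N + 1) * Real.exp ((GS.card : ℝ) / (2 * M)) := by
  have hMr : (0 : ℝ) < M := by exact_mod_cast hM
  have hKr : (0 : ℝ) < K := by rw [hK]; push_cast; positivity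
  set X : Fin (N + 1) → Fin K → ℕ := fun i k =>
    (Js.filter (fun j => j / M = i.val ∧ Gk j k)).card with hX
  have hcard : ∀ κ : Fin (N + 1) → Fin K,
      (Js.filter (fun j => Gk j (κ (Fin.ofNat (N + 1) (j / M))))).card = ∑ i, X i (κ i) := by
    intro κ
    rw [Finset.card_eq_sum_card_fiberwise (f := fun j => Fin.ofNat (N + 1) (j / M))
      (t := Finset.univ) (fun _ _ => Finset.mem_coe.2 (Finset.mem_univ _))]
    apply Finset.sum_congr rfl
    intro i _
    simp only [hX]
    congr 1
    ext j
    simp only [Finset.mem_filter]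
    constructor
    · rintro ⟨⟨hj, hg⟩, he⟩
      refine ⟨hj, ?_, he ▸ hg⟩
      rw [← he]
      simp [Fin.ofNat, Nat.mod_eq_of_lt (hJ j hj)]
    · rintro ⟨hj, he, hg⟩
      have : Fin.ofNat (N + 1) (j / M) = i := by
        ext
        simp [Fin.ofNat, he, Nat.mod_eq_of_lt i.2]
      exact ⟨⟨hj, this.symm ▸ hg⟩, this⟩
  have hfib : ∀ i : ℕ, (Js.filter (fun j => j / M = i)).card ≤ M := by
    intro i
    have : Js.filter (fun j => j / M = i) ⊆ Finset.Ico (i * M) (i * M + M) := by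
      intro j hj
      rw [Finset.mem_filter] at hj
      rw [Finset.mem_Ico]
      have a := Nat.div_add_mod j M
      have b := Nat.mod_lt j hM
      rw [hj.2, mul_comm] at a
      omega
    have := Finset.card_le_card this
    simpa using this
  have hsumX : ∀ i, ∑ k, X i k ≤ M := by
    intro i
    refine le_trans ?_ (hfib i)
    rw [← Finset.card_biUnion]
    · apply Finset.card_le_card
      intro j hj
      simp only [Finset.mem_biUnion, Finset.mem_filter] at hj ⊢
      obtain ⟨k, _, a, b, _⟩ := hj
      exact ⟨a, b⟩
    · intro k _ k' _ hne
      rw [Function.onFun, Finset.disjoint_left]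
      intro j hj hj'
      rw [Finset.mem_filter] at hj hj'
      exact hne (h1 j k k' hj.2.2 hj'.2.2)
  have hXle : ∀ i k, X i k ≤ M := fun i k =>
    (Finset.single_le_sum (f := X i) (fun _ _ => Nat.zero_le _) (Finset.mem_univ k)).trans (hsumX i)
  have hX0 : ∀ i : Fin (N + 1), i.val ∉ GS → ∀ k, X i k = 0 := by
    intro i hi k
    simp only [hX, Finset.card_eq_zero, Finset.filter_eq_empty_iff]
    rintro j hj ⟨he, hg⟩
    exact hi (he ▸ h2 j hj k hg)
  have hexp : ∀ i k, Real.exp ((X i k : ℝ) / M) ≤ 1 + 2 * ((X i k : ℝ) / M) := by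
    intro i k
    have ha : 0 ≤ (X i k : ℝ) / M := by positivity
    have hb : (X i k : ℝ) / M ≤ 1 := by
      rw [div_le_one hMr]; exact_mod_cast hXle i k
    have := Real.abs_exp_sub_one_sub_id_le (x := (X i k : ℝ) / M) (by rwa [abs_of_nonneg ha])
    have := (abs_le.1 this).2
    nlinarith
  have hnode : ∀ i : Fin (N + 1), ∑ k, Real.exp ((X i k : ℝ) / M) ≤
      K * (if i.val ∈ GS then Real.exp (1 / (2 * M)) else 1) := by
    intro i
    split_ifs with h
    · calc ∑ k, Real.exp ((X i k : ℝ) / M) ≤ ∑ k : Fin K, (1 + 2 * ((X i k : ℝ) / M)) :=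
            Finset.sum_le_sum (fun k _ => hexp i k)
        _ = K + 2 / M * ((∑ k, X i k : ℕ) : ℝ) := by
            rw [Finset.sum_add_distrib]
            push_cast
            rw [Finset.mul_sum]
            simp only [Finset.sum_const, Finset.card_univ, Fintype.card_fin, nsmul_eq_mul, mul_one]
            congr 1
            apply Finset.sum_congr rfl
            intro k _
            ring
        _ ≤ K + 2 / M * M := by
            gcongr
            exact_mod_cast hsumX i
        _ = K * (1 / (2 * M) + 1) := by
            rw [hK]; push_cast; field_simp; ring
        _ ≤ _ := by
            gcongr
            exact Real.add_one_le_exp _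
    · apply le_of_eq
      simp [hX0 i h]
  calc _ = ∑ κ : Fin (N + 1) → Fin K, ∏ i, Real.exp ((X i (κ i) : ℝ) / M) := by
        apply Finset.sum_congr rfl
        intro κ _
        rw [hcard κ, ← Real.exp_sum, ← Finset.sum_div]
        push_cast
        rfl
    _ = ∏ i, ∑ k, Real.exp ((X i k : ℝ) / M) := by
        rw [Finset.prod_univ_sum]
        simp
    _ ≤ ∏ i : Fin (N + 1), (K * (if i.val ∈ GS then Real.exp (1 / (2 * M)) else 1)) := by
        apply Finset.prod_le_prod
        · intro i _
          exact Finset.sum_nonneg (fun _ _ => (Real.exp_pos _).le)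
        · intro i _
          exact hnode i
    _ = (K : ℝ) ^ (N + 1) *
        Real.exp (((Finset.univ.filter (fun i : Fin (N + 1) => i.val ∈ GS)).card : ℝ)
          * (1 / (2 * M))) := by
        rw [Finset.prod_mul_distrib, Finset.prod_ite]
        simp only [Finset.prod_const, Finset.card_univ, Fintype.card_fin, one_pow, mul_one]
        rw [← Real.exp_nat_mul]
    _ ≤ _ := by
        rw [mul_one_div]
        gcongr
        refine Finset.card_le_card_of_injOn (fun i => i.val) ?_ ?_
        · intro i hi
          simpa using hi
        · intro i _ j _ h
          exact Fin.ext h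

end Rough

namespace Rough

structure Par (M : ℕ) (t B : ℝ) : Prop where
  two_le : 2 ≤ M
  tpos : 0 < t
  thalf : t ≤ 1 / 2
  tM : 2 ≤ t * M
  one_le : 1 ≤ B
  small : 4 * (8 * B + 12) * t < 1

/-- The cell `i` of level `l` contains a point where `F` is close to a line, with close slope. -/
def Good (M : ℕ) (t B : ℝ) (l : ℕ) (F D : ℝ → ℝ) (m b : ℝ) (i : ℕ) : Prop :=
  ∃ x : ℝ, 0 ≤ x ∧ x ≤ 1 ∧ ⌊x * (M : ℝ) ^ l⌋₊ = i ∧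
    |F x - (b + m * x)| ≤ (2 * B + 3) * (t / M) ^ l ∧ |D x - m| ≤ (3 * B + 6) * t ^ l

open Classical in
noncomputable def goodSet (M : ℕ) (t B : ℝ) (l : ℕ) (F D : ℝ → ℝ) (m b : ℝ) : Finset ℕ :=
  (Finset.range (M ^ l + 1)).filter (Good M t B l F D m b)

noncomputable def pert (ψ : ℝ → ℝ) (M : ℕ) (t : ℝ) (l : ℕ) (a : ℕ → ℝ) (x : ℝ) : ℝ :=
  t ^ l * ∑ i ∈ Finset.range (M ^ l + 1), a i * ψ (x * (M : ℝ) ^ l - i)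

theorem pert_eq (ψ : ℝ → ℝ) (M : ℕ) (t : ℝ) (l : ℕ) (a : ℕ → ℝ) (x : ℝ) :
    pert ψ M t l a x = t ^ l * ∑ i ∈ Finset.range (M ^ l + 1), a i * ψ (x * (M : ℝ) ^ l - i) := rfl

section
variable {ψ ψ' : ℝ → ℝ} {M : ℕ} {t B : ℝ}

theorem pert_der (hB : Bump ψ ψ' B) (h : Par M t B) (l : ℕ) (a : ℕ → ℝ) (x : ℝ) :
    HasDerivAt (pert ψ M (t / M) l a) (pert ψ' M t l a x) x := by
  have hM : (M : ℝ) ≠ 0 := by have := h.two_le; positivity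
  have h1 : HasDerivAt (fun x => ∑ i ∈ Finset.range (M ^ l + 1), a i * ψ (x * (M : ℝ) ^ l - i))
      (∑ i ∈ Finset.range (M ^ l + 1), a i * (ψ' (x * (M : ℝ) ^ l - i) * (M : ℝ) ^ l)) x := by
    apply HasDerivAt.fun_sum
    intro i _
    apply HasDerivAt.const_mul
    have h2 : HasDerivAt (fun x : ℝ => x * (M : ℝ) ^ l - i) ((M : ℝ) ^ l) x := by
      simpa using ((hasDerivAt_id x).mul_const ((M : ℝ) ^ l)).sub_const (i : ℝ)
    exact (hB.der (x * (M : ℝ) ^ l - i)).comp x h2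
  have h3 := h1.const_mul ((t / M) ^ l)
  refine h3.congr_deriv ?_
  rw [pert_eq, div_pow, Finset.mul_sum, Finset.mul_sum]
  apply Finset.sum_congr rfl
  intro i _
  field_simp

theorem pert_bd (hB : Bump ψ ψ' B) (h : Par M t B) (l : ℕ) (a : ℕ → ℝ) (ha : ∀ i, |a i| ≤ 1)
    (x : ℝ) : |pert ψ M (t / M) l a x| ≤ B * (t / M) ^ l := by
  have := h.tpos
  rw [pert_eq, abs_mul, abs_of_nonneg (by positivity), mul_comm]
  gcongr
  exact hB.bd _ a ha _

theorem pert_bd' (hB : Bump ψ ψ' B) (h : Par M t B) (l : ℕ) (a : ℕ → ℝ) (ha : ∀ i, |a i| ≤ 1)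
    (x : ℝ) : |pert ψ' M t l a x| ≤ B * t ^ l := by
  have := h.tpos
  rw [pert_eq, abs_mul, abs_of_nonneg (by positivity), mul_comm]
  gcongr
  exact hB.bd' _ a ha _

theorem pert_lip (hB : Bump ψ ψ' B) (h : Par M t B) (l : ℕ) (a : ℕ → ℝ) (ha : ∀ i, |a i| ≤ 1)
    (x y : ℝ) : |pert ψ' M t l a x - pert ψ' M t l a y| ≤ B * (t * M) ^ l * |x - y| := by
  have := h.tpos
  rw [pert_eq, pert_eq, ← mul_sub, abs_mul, abs_of_nonneg (by positivity)]
  calc _ ≤ t ^ l * (B * |x * (M : ℝ) ^ l - y * (M : ℝ) ^ l|) := by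
        gcongr
        exact hB.lip _ a ha _ _
    _ = _ := by
        rw [← sub_mul, abs_mul, abs_of_nonneg (by positivity : (0 : ℝ) ≤ (M : ℝ) ^ l), mul_pow]
        ring

theorem floor_bounds {x : ℝ} {M l i : ℕ} (hx : 0 ≤ x) (hi : ⌊x * (M : ℝ) ^ l⌋₊ = i) :
    (i : ℝ) ≤ x * (M : ℝ) ^ l ∧ x * (M : ℝ) ^ l < i + 1 := by
  rw [← hi]
  exact ⟨Nat.floor_le (by positivity), Nat.lt_floor_add_one _⟩

theorem floor_parent {x : ℝ} {M l : ℕ} (hM : 0 < M) :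
    ⌊x * (M : ℝ) ^ l⌋₊ = ⌊x * (M : ℝ) ^ (l + 1)⌋₊ / M := by
  rw [← Nat.floor_div_natCast]
  congr 1
  have : (M : ℝ) ≠ 0 := by positivity
  field_simp
  ring

theorem floor_mem {x : ℝ} {M l : ℕ} (hx : x ≤ 1) :
    ⌊x * (M : ℝ) ^ l⌋₊ ∈ Finset.range (M ^ l + 1) := by
  rw [Finset.mem_range, Nat.lt_succ_iff]
  have : x * (M : ℝ) ^ l ≤ ((M ^ l : ℕ) : ℝ) := by
    push_cast
    have : (0 : ℝ) ≤ (M : ℝ) ^ l := by positivity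
    nlinarith
  calc ⌊x * (M : ℝ) ^ l⌋₊ ≤ ⌊((M ^ l : ℕ) : ℝ)⌋₊ := Nat.floor_mono this
    _ = M ^ l := Nat.floor_natCast _

open Classical in
theorem pert_local (g : ℝ → ℝ) (c τ : ℝ) (hg : ∀ x, 0 ≤ x → x ≤ 1 → g x = c)
    (hz : ∀ x, x ≤ -1 ∨ 2 ≤ x → g x = 0) (E : ℕ → Prop)
    (hE : ∀ i j, E i → E j → i ≠ j → i + 2 ≤ j ∨ j + 2 ≤ i) (l : ℕ) (a : ℕ → ℝ) (x : ℝ)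
    (hx : 0 ≤ x) (hx1 : x ≤ 1) (hEx : E ⌊x * (M : ℝ) ^ l⌋₊) :
    pert g M τ l a x = τ ^ l * (a ⌊x * (M : ℝ) ^ l⌋₊ * c) +
      pert g M τ l (fun i => if E i then 0 else a i) x := by
  rw [pert_eq, pert_eq, ← mul_add]
  congr 1
  set i0 := ⌊x * (M : ℝ) ^ l⌋₊ with hi0
  obtain ⟨f1, f2⟩ := floor_bounds hx hi0.symm
  have e1 : ∑ i ∈ Finset.range (M ^ l + 1), a i * g (x * (M : ℝ) ^ l - i) =
      ∑ i ∈ Finset.range (M ^ l + 1), (if E i then a i else 0) * g (x * (M : ℝ) ^ l - i) +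
      ∑ i ∈ Finset.range (M ^ l + 1), (if E i then 0 else a i) * g (x * (M : ℝ) ^ l - i) := by
    rw [← Finset.sum_add_distrib]
    apply Finset.sum_congr rfl
    intro i _
    split_ifs <;> ring
  rw [e1]
  congr 1
  rw [Finset.sum_eq_single i0]
  · rw [if_pos hEx, hg _ (by linarith) (by linarith)]
  · intro i _ hne
    split_ifs with h
    · rw [hz, mul_zero]
      rcases hE i i0 h hEx hne with h' | h'
      · right
        have : (i : ℝ) + 2 ≤ i0 := by exact_mod_cast h'
        linarith
      · left
        have : (i0 : ℝ) + 2 ≤ i := by exact_mod_cast h'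
        linarith
    · rw [zero_mul]
  · intro h
    exact absurd (floor_mem hx1) h

theorem good_parent (h : Par M t B) (l : ℕ) (F D F' D' : ℝ → ℝ) (m b : ℝ)
    (hF : ∀ x, |F' x - F x| ≤ B * (t / M) ^ l) (hD : ∀ x, |D' x - D x| ≤ B * t ^ l)
    (j : ℕ) (hg : Good M t B (l + 1) F' D' m b j) : j / M ∈ goodSet M t B l F D m b := by
  classical
  obtain ⟨x, h0, h1, hj, hv, hs⟩ := hg
  have hM : (2 : ℝ) ≤ M := by exact_mod_cast h.two_le
  have ht := h.tpos
  have ht2 := h.thalf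
  have hB := h.one_le
  have hp : ⌊x * (M : ℝ) ^ l⌋₊ = j / M := by
    rw [floor_parent (by have := h.two_le; omega), hj]
  rw [goodSet, Finset.mem_filter]
  refine ⟨hp ▸ floor_mem h1, x, h0, h1, hp, ?_, ?_⟩
  · have hv0 : 0 < (t / M) ^ l := by positivity
    have hq : t / M ≤ 1 / 2 := by
      rw [div_le_iff₀ (by linarith)]; nlinarith
    have e : F x - (b + m * x) = (F' x - (b + m * x)) - (F' x - F x) := by ring
    rw [e]
    refine (abs_sub _ _).trans ?_
    have := hF x
    rw [pow_succ] at hv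
    have : (2 * B + 3) * ((t / M) ^ l * (t / M)) ≤ (2 * B + 3) * ((t / M) ^ l * (1 / 2)) := by
      gcongr
    nlinarith
  · have hv0 : 0 < t ^ l := by positivity
    have e : D x - m = (D' x - m) - (D' x - D x) := by ring
    rw [e]
    refine (abs_sub _ _).trans ?_
    have := hD x
    rw [pow_succ] at hs
    have : (3 * B + 6) * (t ^ l * t) ≤ (3 * B + 6) * (t ^ l * (1 / 2)) := by
      gcongr
    nlinarith

/-- A mean value estimate. -/
theorem mvt_le (G G' : ℝ → ℝ) (hG : ∀ x, HasDerivAt G (G' x) x) (x y C : ℝ)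
    (hC : ∀ z, |z - x| ≤ |y - x| → |G' z| ≤ C) : |G y - G x| ≤ C * |y - x| := by
  have := (convex_segment x y).norm_image_sub_le_of_norm_hasDerivWithin_le
    (f := G) (f' := G') (C := C) (fun z _ => (hG z).hasDerivWithinAt)
    (fun z hz => by
      apply hC
      rw [segment_eq_uIcc] at hz
      exact abs_sub_left_of_mem_uIcc hz) (left_mem_segment ℝ x y) (right_mem_segment ℝ x y)
  simpa using this

theorem option_unique (h : Par M t B) (l : ℕ) (G G' : ℝ → ℝ)
    (hG : ∀ x, HasDerivAt G (G' x) x)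
    (hl : ∀ x y, |G' x - G' y| ≤ 2 * B * (t * M) ^ l * |x - y|) (m b : ℝ) (k k' : ℕ) (x x' : ℝ)
    (hx : 0 ≤ x) (hx' : 0 ≤ x')
    (hf : ⌊x * (M : ℝ) ^ (l + 1)⌋₊ = ⌊x' * (M : ℝ) ^ (l + 1)⌋₊)
    (h1 : |G x + (t / M) ^ l * ((k : ℝ) / (4 * M)) - (b + m * x)| ≤ (2 * B + 3) * (t / M) ^ (l + 1))
    (h1' : |G x' + (t / M) ^ l * ((k' : ℝ) / (4 * M)) - (b + m * x')|
      ≤ (2 * B + 3) * (t / M) ^ (l + 1))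
    (h2 : |G' x - m| ≤ (3 * B + 6) * t ^ (l + 1)) : (k' : ℝ) < k + 1 := by
  have hM : (2 : ℝ) ≤ M := by exact_mod_cast h.two_le
  have hM0 : (0 : ℝ) < M := by linarith
  have ht := h.tpos
  have ht2 := h.thalf
  have hB := h.one_le
  have htM := h.tM
  have hdist : |x' - x| * (M : ℝ) ^ (l + 1) ≤ 1 := by
    obtain ⟨a1, a2⟩ := floor_bounds hx hf
    obtain ⟨b1, b2⟩ := floor_bounds (M := M) (l := l + 1) hx' rfl
    have : |x' - x| * (M : ℝ) ^ (l + 1) = |x' * (M : ℝ) ^ (l + 1) - x * (M : ℝ) ^ (l + 1)| := by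
      rw [← sub_mul, abs_mul, abs_of_nonneg (by positivity : (0 : ℝ) ≤ (M : ℝ) ^ (l + 1))]
    rw [this, abs_le]
    constructor <;> linarith
  have hmv := mvt_le (fun z => G z - (b + m * z)) (fun z => G' z - m)
    (fun z => by
      have := (hG z).fun_sub (((hasDerivAt_id z).const_mul m).const_add b)
      simpa using this) x x' ((4 * B + 6) * t ^ (l + 1)) (by
      intro z hz
      have e : G' z - m = (G' z - G' x) + (G' x - m) := by ring
      rw [e]
      refine (abs_add_le _ _).trans ?_
      have a1 := hl z x
      have a2 : 2 * B * (t * M) ^ l * |z - x| ≤ B * t ^ (l + 1) := by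
        calc 2 * B * (t * M) ^ l * |z - x| ≤ 2 * B * (t * M) ^ l * |x' - x| := by gcongr
          _ ≤ (t * M) * (B * (t * M) ^ l * |x' - x|) := by
              have : 0 ≤ B * (t * M) ^ l * |x' - x| := by positivity
              nlinarith
          _ = B * t ^ (l + 1) * (|x' - x| * (M : ℝ) ^ (l + 1)) := by
              rw [mul_pow]; ring
          _ ≤ B * t ^ (l + 1) * 1 := by gcongr
          _ = _ := mul_one _
      linarith)
  have hmv' : |G x' - (b + m * x') - (G x - (b + m * x))| ≤ (4 * B + 6) * (t / M) ^ (l + 1) := by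
    refine hmv.trans ?_
    rw [div_pow, mul_assoc, ← mul_div_assoc]
    rw [le_div_iff₀ (by positivity)]
    calc (4 * B + 6) * (t ^ (l + 1) * |x' - x|) * (M : ℝ) ^ (l + 1)
        = (4 * B + 6) * t ^ (l + 1) * (|x' - x| * (M : ℝ) ^ (l + 1)) := by ring
      _ ≤ (4 * B + 6) * t ^ (l + 1) * 1 := by gcongr
      _ = _ := by ring
  have hk : (t / M) ^ l * (((k' : ℝ) - k) / (4 * M)) ≤ (8 * B + 12) * (t / M) ^ (l + 1) := by
    have c1 := (abs_le.1 h1).1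
    have c2 := (abs_le.1 h1').2
    have c3 := (abs_le.1 hmv').1
    have : (t / M) ^ l * (((k' : ℝ) - k) / (4 * M)) =
      (t / M) ^ l * ((k' : ℝ) / (4 * M)) - (t / M) ^ l * ((k : ℝ) / (4 * M)) := by ring
    rw [this]
    linarith
  have hv : 0 < (t / M) ^ l := by positivity
  have hk2 : ((k' : ℝ) - k) / (4 * M) ≤ (8 * B + 12) * (t / M) := by
    rw [pow_succ] at hk
    have : (t / M) ^ l * (((k' : ℝ) - k) / (4 * M)) ≤ (t / M) ^ l * ((8 * B + 12) * (t / M)) := by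
      linarith
    exact le_of_mul_le_mul_left this hv
  rw [div_le_iff₀ (by positivity)] at hk2
  have : (8 * B + 12) * (t / M) * (4 * M) = 4 * (8 * B + 12) * t := by field_simp
  have := h.small
  linarith

end

end Rough

namespace Rough

section
variable {ψ ψ' : ℝ → ℝ} {M : ℕ} {t B : ℝ}

open Classical in
theorem half (hB : Bump ψ ψ' B) (h : Par M t B) (l : ℕ) (F D : ℝ → ℝ)
    (hF : ∀ x, HasDerivAt F (D x) x) (hD : ∀ x y, |D x - D y| ≤ B * (t * M) ^ l * |x - y|)
    (m b : ℝ) (E : ℕ → Prop) (hE : ∀ i j, E i → E j → i ≠ j → i + 2 ≤ j ∨ j + 2 ≤ i)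
    (ao : ℕ → ℝ) (hao : ∀ i, |ao i| ≤ 1)
    (a : (Fin (M ^ l + 1) → Fin (4 * M)) → ℕ → ℝ)
    (ha : ∀ κ i, a κ i = if E i then ((κ (Fin.ofNat (M ^ l + 1) i)).val : ℝ) / (4 * M) else ao i) :
    ∑ κ : Fin (M ^ l + 1) → Fin (4 * M),
      Real.exp ((((goodSet M t B (l + 1) (fun x => F x + pert ψ M (t / M) l (a κ) x)
        (fun x => D x + pert ψ' M t l (a κ) x) m b).filter (fun j => E (j / M))).card : ℝ) / M)
      ≤ ((4 * M : ℕ) : ℝ) ^ (M ^ l + 1) *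
        Real.exp (((goodSet M t B l F D m b).card : ℝ) / (2 * M)) := by
  have hM0 : 0 < M := by have := h.two_le; omega
  have hMr : (0 : ℝ) < M := by exact_mod_cast hM0
  set ao' : ℕ → ℝ := fun i => if E i then 0 else ao i with hao'
  have hao1 : ∀ i, |ao' i| ≤ 1 := by
    intro i
    simp only [hao']
    split_ifs
    · simp
    · exact hao i
  have hfr : ∀ k : Fin (4 * M), |((k.val : ℝ)) / (4 * M)| ≤ 1 := by
    intro k
    rw [abs_of_nonneg (by positivity), div_le_one (by positivity)]
    exact_mod_cast k.2.le
  have ha1 : ∀ κ i, |a κ i| ≤ 1 := by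
    intro κ i
    rw [ha]
    split_ifs
    · exact hfr _
    · exact hao i
  have hoff : ∀ κ, (fun i => if E i then 0 else a κ i) = ao' := by
    intro κ
    funext i
    simp only [hao', ha]
    split_ifs <;> rfl
  have loc : ∀ κ x, 0 ≤ x → x ≤ 1 → E ⌊x * (M : ℝ) ^ l⌋₊ →
      pert ψ M (t / M) l (a κ) x = (t / M) ^ l *
        (((κ (Fin.ofNat (M ^ l + 1) ⌊x * (M : ℝ) ^ l⌋₊)).val : ℝ) / (4 * M))
        + pert ψ M (t / M) l ao' x := by
    intro κ x h0 h1 hx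
    rw [pert_local ψ 1 (t / M) (fun x a b => (hB.plat x a b).1) (fun x a => (hB.supp x a).1) E hE
      l (a κ) x h0 h1 hx, hoff, mul_one, ha, if_pos hx]
  have loc' : ∀ κ x, 0 ≤ x → x ≤ 1 → E ⌊x * (M : ℝ) ^ l⌋₊ →
      pert ψ' M t l (a κ) x = pert ψ' M t l ao' x := by
    intro κ x h0 h1 hx
    rw [pert_local ψ' 0 t (fun x a b => (hB.plat x a b).2) (fun x a => (hB.supp x a).2) E hE
      l (a κ) x h0 h1 hx, hoff, mul_zero, mul_zero, zero_add]
  set G : ℝ → ℝ := fun x => F x + pert ψ M (t / M) l ao' x with hG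
  set G' : ℝ → ℝ := fun x => D x + pert ψ' M t l ao' x with hG'
  set Gk : ℕ → Fin (4 * M) → Prop := fun j k => E (j / M) ∧ ∃ x : ℝ, 0 ≤ x ∧ x ≤ 1 ∧
    ⌊x * (M : ℝ) ^ (l + 1)⌋₊ = j ∧
    |G x + (t / M) ^ l * ((k.val : ℝ) / (4 * M)) - (b + m * x)| ≤ (2 * B + 3) * (t / M) ^ (l + 1) ∧
    |G' x - m| ≤ (3 * B + 6) * t ^ (l + 1) with hGk
  have hGder : ∀ x, HasDerivAt G (G' x) x := fun x => (hF x).fun_add (pert_der hB h l ao' x)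
  have hGlip : ∀ x y, |G' x - G' y| ≤ 2 * B * (t * M) ^ l * |x - y| := by
    intro x y
    have e : G' x - G' y = (D x - D y) + (pert ψ' M t l ao' x - pert ψ' M t l ao' y) := by
      simp only [hG']; ring
    rw [e]
    refine (abs_add_le _ _).trans ?_
    have := hD x y
    have := pert_lip hB h l ao' hao1 x y
    linarith
  have hpar : ∀ x : ℝ, ⌊x * (M : ℝ) ^ l⌋₊ = ⌊x * (M : ℝ) ^ (l + 1)⌋₊ / M := fun x =>
    floor_parent hM0
  have key := comb (M ^ l) (4 * M) M hM0 rfl Gk (goodSet M t B l F D m b)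
    (Finset.range (M ^ (l + 1) + 1)) (by
      intro j hj
      rw [Finset.mem_range, Nat.lt_succ_iff] at hj
      rw [Nat.lt_succ_iff]
      calc j / M ≤ M ^ (l + 1) / M := Nat.div_le_div_right hj
        _ = M ^ l := by rw [pow_succ, Nat.mul_div_cancel _ hM0]) (by
      rintro j k k' ⟨_, x, x0, x1, xj, xv, xs⟩ ⟨_, y, y0, y1, yj, yv, ys⟩
      have i1 := option_unique h l G G' hGder hGlip m b k.val k'.val x y x0 y0 (xj.trans yj.symm)
        xv yv xs
      have i2 := option_unique h l G G' hGder hGlip m b k'.val k.val y x y0 x0 (yj.trans xj.symm)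
        yv xv ys
      have i1' : k'.val < k.val + 1 := by exact_mod_cast i1
      have i2' : k.val < k'.val + 1 := by exact_mod_cast i2
      ext
      omega) (by
      rintro j hj k ⟨hEj, x, x0, x1, xj, xv, xs⟩
      have hEx : E ⌊x * (M : ℝ) ^ l⌋₊ := by rw [hpar, xj]; exact hEj
      refine good_parent h l F D (fun x => F x + pert ψ M (t / M) l (a (fun _ => k)) x)
        (fun x => D x + pert ψ' M t l (a (fun _ => k)) x) m b ?_ ?_ j ?_
      · intro x
        simpa using pert_bd hB h l _ (ha1 (fun _ => k)) x
      · intro x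
        simpa using pert_bd' hB h l _ (ha1 (fun _ => k)) x
      · refine ⟨x, x0, x1, xj, ?_, ?_⟩
        · dsimp only
          rw [loc _ x x0 x1 hEx]
          convert xv using 2
          simp only [hG]; ring
        · dsimp only
          rw [loc' _ x x0 x1 hEx]
          exact xs)
  refine le_trans (Finset.sum_le_sum ?_) key
  intro κ _
  apply Real.exp_le_exp.2
  gcongr
  intro j hj
  rw [Finset.mem_filter, goodSet, Finset.mem_filter] at hj
  obtain ⟨⟨hj1, x, x0, x1, xj, xv, xs⟩, hEj⟩ := hj
  have hEx : E ⌊x * (M : ℝ) ^ l⌋₊ := by rw [hpar, xj]; exact hEj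
  dsimp only at xv xs
  refine (@Finset.mem_filter ℕ _ (_) _ _).2 ⟨hj1, hEj, x, x0, x1, xj, ?_, ?_⟩
  · rw [loc _ x x0 x1 hEx, hpar, xj] at xv
    convert xv using 2
    simp only [hG]; ring
  · rw [loc' _ x x0 x1 hEx] at xs
    exact xs

/-- Coefficients from a pair of option assignments. -/
noncomputable def coef (M l : ℕ)
    (ω : (Fin (M ^ l + 1) → Fin (4 * M)) × (Fin (M ^ l + 1) → Fin (4 * M))) (i : ℕ) : ℝ :=
  if i % 2 = 0 then ((ω.1 (Fin.ofNat (M ^ l + 1) i)).val : ℝ) / (4 * M)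
  else ((ω.2 (Fin.ofNat (M ^ l + 1) i)).val : ℝ) / (4 * M)

theorem coef_bd (h : Par M t B) (l : ℕ)
    (ω : (Fin (M ^ l + 1) → Fin (4 * M)) × (Fin (M ^ l + 1) → Fin (4 * M))) (i : ℕ) :
    |coef M l ω i| ≤ 1 := by
  have hM0 : 0 < M := by have := h.two_le; omega
  have hfr : ∀ k : Fin (4 * M), |((k.val : ℝ)) / (4 * M)| ≤ 1 := by
    intro k
    rw [abs_of_nonneg (by positivity), div_le_one (by positivity)]
    exact_mod_cast k.2.le
  rw [coef]
  split_ifs <;> exact hfr _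

theorem average (hB : Bump ψ ψ' B) (h : Par M t B) (l : ℕ) (F D : ℝ → ℝ)
    (hF : ∀ x, HasDerivAt F (D x) x) (hD : ∀ x y, |D x - D y| ≤ B * (t * M) ^ l * |x - y|)
    (m b : ℝ) :
    ∑ ω : (Fin (M ^ l + 1) → Fin (4 * M)) × (Fin (M ^ l + 1) → Fin (4 * M)),
      Real.exp (((goodSet M t B (l + 1) (fun x => F x + pert ψ M (t / M) l (coef M l ω) x)
        (fun x => D x + pert ψ' M t l (coef M l ω) x) m b).card : ℝ) / (2 * M))
      ≤ ∑ _ω : (Fin (M ^ l + 1) → Fin (4 * M)) × (Fin (M ^ l + 1) → Fin (4 * M)),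
        Real.exp (((goodSet M t B l F D m b).card : ℝ) / (2 * M)) := by
  classical
  have hM0 : 0 < M := by have := h.two_le; omega
  have hMr : (0 : ℝ) < M := by exact_mod_cast hM0
  set S := fun ω => goodSet M t B (l + 1) (fun x => F x + pert ψ M (t / M) l (coef M l ω) x)
        (fun x => D x + pert ψ' M t l (coef M l ω) x) m b with hS
  set R := Real.exp (((goodSet M t B l F D m b).card : ℝ) / (2 * M)) with hR
  have hpt : ∀ ω, Real.exp (((S ω).card : ℝ) / (2 * M)) ≤
      (Real.exp ((((S ω).filter (fun j => j / M % 2 = 0)).card : ℝ) / M) +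
       Real.exp ((((S ω).filter (fun j => j / M % 2 = 1)).card : ℝ) / M)) / 2 := by
    intro ω
    have hc : (S ω).card = ((S ω).filter (fun j => j / M % 2 = 0)).card +
        ((S ω).filter (fun j => j / M % 2 = 1)).card := by
      rw [← Finset.card_filter_add_card_filter_not (s := S ω) (fun j => j / M % 2 = 0)]
      congr 2
      ext j
      simp only [Finset.mem_filter]
      refine and_congr_right fun _ => ?_
      omega
    rw [hc]
    set p : ℝ := (((S ω).filter (fun j => j / M % 2 = 0)).card : ℝ)
    set q : ℝ := (((S ω).filter (fun j => j / M % 2 = 1)).card : ℝ)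
    have e1 : Real.exp (p / M) = Real.exp (p / (2 * M)) ^ 2 := by
      rw [← Real.exp_nat_mul]; congr 1; push_cast; field_simp
    have e2 : Real.exp (q / M) = Real.exp (q / (2 * M)) ^ 2 := by
      rw [← Real.exp_nat_mul]; congr 1; push_cast; field_simp
    have e3 : Real.exp (((((S ω).filter (fun j => j / M % 2 = 0)).card +
        ((S ω).filter (fun j => j / M % 2 = 1)).card : ℕ) : ℝ) / (2 * M)) =
        Real.exp (p / (2 * M)) * Real.exp (q / (2 * M)) := by
      rw [← Real.exp_add]; congr 1; push_cast; ring
    rw [e1, e2, e3]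
    nlinarith [sq_nonneg (Real.exp (p / (2 * M)) - Real.exp (q / (2 * M)))]
  have hev : ∀ ko, ∑ ke, Real.exp ((((S (ke, ko)).filter (fun j => j / M % 2 = 0)).card : ℝ) / M)
      ≤ ((4 * M : ℕ) : ℝ) ^ (M ^ l + 1) * R := by
    intro ko
    have := half hB h l F D hF hD m b (fun i => i % 2 = 0) (by intro i j; omega)
      (fun i => if i % 2 = 0 then 0 else coef M l (ko, ko) i) (by
        intro i
        split_ifs
        · simp
        · exact coef_bd h l _ i) (fun ke => coef M l (ke, ko)) (by
        intro κ i
        simp only [coef]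
        split_ifs <;> rfl)
    convert this
  have hod : ∀ ke, ∑ ko, Real.exp ((((S (ke, ko)).filter (fun j => j / M % 2 = 1)).card : ℝ) / M)
      ≤ ((4 * M : ℕ) : ℝ) ^ (M ^ l + 1) * R := by
    intro ke
    have := half hB h l F D hF hD m b (fun i => i % 2 = 1) (by intro i j; omega)
      (fun i => if i % 2 = 0 then coef M l (ke, ke) i else 0) (by
        intro i
        split_ifs
        · exact coef_bd h l _ i
        · simp) (fun ko => coef M l (ke, ko)) (by
        intro κ i
        simp only [coef]
        rcases Nat.mod_two_eq_zero_or_one i with hi | hi <;> simp [hi])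
    convert this
  refine (Finset.sum_le_sum (fun ω _ => hpt ω)).trans ?_
  rw [← Finset.sum_div, Finset.sum_add_distrib]
  have s1 : ∑ ω, Real.exp ((((S ω).filter (fun j => j / M % 2 = 0)).card : ℝ) / M) ≤
      ((4 * M : ℕ) : ℝ) ^ (M ^ l + 1) * (((4 * M : ℕ) : ℝ) ^ (M ^ l + 1) * R) := by
    rw [Fintype.sum_prod_type_right]
    refine (Finset.sum_le_sum (fun ko _ => hev ko)).trans (le_of_eq ?_)
    simp
  have s2 : ∑ ω, Real.exp ((((S ω).filter (fun j => j / M % 2 = 1)).card : ℝ) / M) ≤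
      ((4 * M : ℕ) : ℝ) ^ (M ^ l + 1) * (((4 * M : ℕ) : ℝ) ^ (M ^ l + 1) * R) := by
    rw [Fintype.sum_prod_type]
    refine (Finset.sum_le_sum (fun ko _ => hod ko)).trans (le_of_eq ?_)
    simp
  have s3 : ∑ _ω : (Fin (M ^ l + 1) → Fin (4 * M)) × (Fin (M ^ l + 1) → Fin (4 * M)), R =
      ((4 * M : ℕ) : ℝ) ^ (M ^ l + 1) * (((4 * M : ℕ) : ℝ) ^ (M ^ l + 1) * R) := by
    simp [mul_assoc]
  rw [s3]
  linarith

/-- The potential. -/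
noncomputable def pot {ι : Type} (M : ℕ) (t B : ℝ) (w : ι → ENNReal) (m b : ι → ℝ) (l : ℕ)
    (F D : ℝ → ℝ) : ENNReal :=
  ∑' τ, w τ * ENNReal.ofReal
    (Real.exp (((goodSet M t B l F D (m τ) (b τ)).card : ℝ) / (2 * M)))

theorem step {ι : Type} (w : ι → ENNReal) (m b : ι → ℝ) (hB : Bump ψ ψ' B) (h : Par M t B)
    (l : ℕ) (F D : ℝ → ℝ)
    (hF : ∀ x, HasDerivAt F (D x) x) (hD : ∀ x y, |D x - D y| ≤ B * (t * M) ^ l * |x - y|) :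
    ∃ a : ℕ → ℝ, (∀ i, |a i| ≤ 1) ∧
      pot M t B w m b (l + 1) (fun x => F x + pert ψ M (t / M) l a x)
        (fun x => D x + pert ψ' M t l a x) ≤ pot M t B w m b l F D := by
  by_contra hcon
  push Not at hcon
  have hM0 : 0 < M := by have := h.two_le; omega
  have : NeZero (4 * M) := ⟨by omega⟩
  have hlt := ENNReal.sum_lt_sum_of_nonempty
    (s := (Finset.univ : Finset ((Fin (M ^ l + 1) → Fin (4 * M)) × (Fin (M ^ l + 1) → Fin (4 * M)))))
    Finset.univ_nonempty (fun ω _ => hcon (coef M l ω) (coef_bd h l ω))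
  refine absurd hlt (not_lt.2 ?_)
  simp only [pot]
  rw [← Summable.tsum_finsetSum (fun _ _ => ENNReal.summable),
    ← Summable.tsum_finsetSum (fun _ _ => ENNReal.summable)]
  apply ENNReal.tsum_le_tsum
  intro τ
  rw [← Finset.mul_sum, ← Finset.mul_sum]
  refine mul_le_mul' le_rfl ?_
  rw [← ENNReal.ofReal_sum_of_nonneg (fun _ _ => (Real.exp_pos _).le),
    ← ENNReal.ofReal_sum_of_nonneg (fun _ _ => (Real.exp_pos _).le)]
  exact ENNReal.ofReal_le_ofReal (average hB h l F D hF hD (m τ) (b τ))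

end

end Rough

namespace Rough

structure Sys {ι : Type} (M : ℕ) (t B : ℝ) (w : ι → ENNReal) (m b : ι → ℝ)
    (F D : ℕ → ℝ → ℝ) (f g : ℝ → ℝ) : Prop where
  F0 : ∀ x, F 0 x = 0
  D0 : ∀ x, D 0 x = 0
  der : ∀ l x, HasDerivAt (F l) (D l x) x
  lip : ∀ l x y, |D l x - D l y| ≤ B * (t * M) ^ l * |x - y|
  pot_le : ∀ l, pot M t B w m b l (F l) (D l) ≤ pot M t B w m b 0 (F 0) (D 0)
  derf : ∀ x, HasDerivAt f (g x) x
  appF : ∀ l x, |f x - F l x| ≤ 2 * B * (t / M) ^ l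
  appD : ∀ l x, |g x - D l x| ≤ 2 * B * t ^ l

theorem exists_seq {ι : Type} {ψ ψ' : ℝ → ℝ} {M : ℕ} {t B : ℝ}
    (w : ι → ENNReal) (m b : ι → ℝ) (hB : Bump ψ ψ' B) (h : Par M t B) :
    ∃ F D : ℕ → ℝ → ℝ, (∀ x, F 0 x = 0) ∧ (∀ x, D 0 x = 0) ∧
      (∀ l x, HasDerivAt (F l) (D l x) x) ∧
      (∀ l x y, |D l x - D l y| ≤ B * (t * M) ^ l * |x - y|) ∧
      (∀ l, pot M t B w m b l (F l) (D l) ≤ pot M t B w m b 0 (F 0) (D 0)) ∧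
      (∀ l x, |F (l + 1) x - F l x| ≤ B * (t / M) ^ l) ∧
      (∀ l x, |D (l + 1) x - D l x| ≤ B * t ^ l) := by
  have ht := h.tpos
  have hB1 := h.one_le
  let ok : ℕ → (ℝ → ℝ) × (ℝ → ℝ) → Prop := fun l p =>
    (∀ x, HasDerivAt p.1 (p.2 x) x) ∧ (∀ x y, |p.2 x - p.2 y| ≤ B * (t * M) ^ l * |x - y|)
  have hstep : ∀ l (p : (ℝ → ℝ) × (ℝ → ℝ)), ok l p → ∃ q : (ℝ → ℝ) × (ℝ → ℝ), ok (l + 1) q ∧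
      (∀ x, |q.1 x - p.1 x| ≤ B * (t / M) ^ l) ∧ (∀ x, |q.2 x - p.2 x| ≤ B * t ^ l) ∧
      pot M t B w m b (l + 1) q.1 q.2 ≤ pot M t B w m b l p.1 p.2 := by
    rintro l p ⟨p1, p2⟩
    obtain ⟨a, ha, hpot⟩ := step w m b hB h l p.1 p.2 p1 p2
    refine ⟨(fun x => p.1 x + pert ψ M (t / M) l a x, fun x => p.2 x + pert ψ' M t l a x),
      ⟨fun x => (p1 x).fun_add (pert_der hB h l a x), fun x y => ?_⟩, fun x => ?_, fun x => ?_, hpot⟩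
    · have e : (p.2 x + pert ψ' M t l a x) - (p.2 y + pert ψ' M t l a y) =
        (p.2 x - p.2 y) + (pert ψ' M t l a x - pert ψ' M t l a y) := by ring
      dsimp only
      rw [e]
      refine (abs_add_le _ _).trans ?_
      have i1 := p2 x y
      have i2 := pert_lip hB h l a ha x y
      have i3 : 2 * (B * (t * M) ^ l * |x - y|) ≤ (t * M) * (B * (t * M) ^ l * |x - y|) := by
        gcongr
        exact h.tM
      calc _ ≤ 2 * (B * (t * M) ^ l * |x - y|) := by linarith
        _ ≤ _ := i3
        _ = _ := by ring
    · simpa using pert_bd hB h l a ha x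
    · simpa using pert_bd' hB h l a ha x
  choose nxt hn using hstep
  let S : (l : ℕ) → {p : (ℝ → ℝ) × (ℝ → ℝ) // ok l p} := fun l =>
    Nat.rec (motive := fun l => {p : (ℝ → ℝ) × (ℝ → ℝ) // ok l p})
      ⟨(fun _ => 0, fun _ => 0), fun x => hasDerivAt_const x 0, fun x y => by
        simp only [sub_self, abs_zero]; positivity⟩
      (fun l p => ⟨nxt l p.1 p.2, (hn l p.1 p.2).1⟩) l
  have hS : ∀ l, (S (l + 1)).1 = nxt l (S l).1 (S l).2 := fun l => rfl
  refine ⟨fun l => (S l).1.1, fun l => (S l).1.2, fun _ => rfl, fun _ => rfl,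
    fun l => (S l).2.1, fun l => (S l).2.2, fun l => ?_, fun l x => ?_, fun l x => ?_⟩
  · induction l with
    | zero => exact le_rfl
    | succ l ih =>
      refine le_trans ?_ ih
      simp only [hS]
      exact (hn l (S l).1 (S l).2).2.2.2
  · simp only [hS]
    exact (hn l (S l).1 (S l).2).2.1 x
  · simp only [hS]
    exact (hn l (S l).1 (S l).2).2.2.1 x

theorem lim_geom (u : ℕ → ℝ) (C r : ℝ) (hC : 0 ≤ C) (hr : 0 ≤ r) (hr2 : r ≤ 1 / 2)
    (hu : ∀ l, |u (l + 1) - u l| ≤ C * r ^ l) :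
    ∃ a, Tendsto u atTop (nhds a) ∧ ∀ l, |a - u l| ≤ 2 * C * r ^ l := by
  have hu' : ∀ l, dist (u l) (u (l + 1)) ≤ C * r ^ l := fun l => by
    rw [dist_comm, Real.dist_eq]; exact hu l
  obtain ⟨a, ha⟩ := cauchySeq_tendsto_of_complete
    (cauchySeq_of_le_geometric r C (by linarith) hu')
  refine ⟨a, ha, fun l => ?_⟩
  have := dist_le_of_le_geometric_of_tendsto r C (by linarith) hu' ha l
  rw [dist_comm, Real.dist_eq] at this
  refine this.trans ?_
  rw [div_le_iff₀ (by linarith)]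
  have : 0 ≤ C * r ^ l := by positivity
  nlinarith

theorem exists_Sys {ι : Type} {ψ ψ' : ℝ → ℝ} {M : ℕ} {t B : ℝ}
    (w : ι → ENNReal) (m b : ι → ℝ) (hB : Bump ψ ψ' B) (h : Par M t B) :
    ∃ F D f g, Sys M t B w m b F D f g := by
  obtain ⟨F, D, F0, D0, der, lip, pot, dF, dD⟩ := exists_seq w m b hB h
  have ht := h.tpos
  have ht2 := h.thalf
  have hB1 := h.one_le
  have hM : (2 : ℝ) ≤ M := by exact_mod_cast h.two_le
  have htM : t / M ≤ 1 / 2 := by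
    rw [div_le_iff₀ (by linarith)]; nlinarith
  have h1 := fun x => lim_geom (fun l => F l x) B (t / M) (by linarith) (by positivity) htM
    (fun l => dF l x)
  have h2 := fun x => lim_geom (fun l => D l x) B t (by linarith) ht.le ht2 (fun l => dD l x)
  choose f hf hf' using h1
  choose g hg hg' using h2
  refine ⟨F, D, f, g, F0, D0, der, lip, pot, ?_, fun l x => hf' x l, fun l x => hg' x l⟩
  have hunif : TendstoUniformly D g atTop := by
    rw [Metric.tendstoUniformly_iff]
    intro ε hε
    have : Tendsto (fun l : ℕ => 2 * B * t ^ l) atTop (nhds (2 * B * 0)) :=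
      (tendsto_pow_atTop_nhds_zero_of_lt_one ht.le (by linarith)).const_mul _
    rw [mul_zero] at this
    filter_upwards [this.eventually (gt_mem_nhds hε)] with l hl x
    rw [Real.dist_eq]
    exact (hg' x l).trans_lt hl
  intro x
  exact hasDerivAt_of_tendstoUniformly hunif (Eventually.of_forall der) (fun x => hf x) x

section
variable {ι : Type} {M : ℕ} {t B : ℝ} {w : ι → ENNReal} {m b : ι → ℝ} {F D : ℕ → ℝ → ℝ}
  {f g : ℝ → ℝ}

theorem Sys.g_bd (S : Sys M t B w m b F D f g) (x : ℝ) : |g x| ≤ 2 * B := by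
  simpa [S.D0] using S.appD 0 x

theorem Sys.f_bd (S : Sys M t B w m b F D f g) (x : ℝ) : |f x| ≤ 2 * B := by
  simpa [S.F0] using S.appF 0 x

theorem Sys.f_lip (S : Sys M t B w m b F D f g) (x y : ℝ) : |f x - f y| ≤ 2 * B * |x - y| :=
  mvt_le f g S.derf y x (2 * B) (fun z _ => S.g_bd z)

theorem Sys.holder (S : Sys M t B w m b F D f g) (h : Par M t B) (α : ℝ) (hα : 0 < α)
    (hα1 : α < 1) (hta : t = (M : ℝ) ^ (-α)) (x y : ℝ) (hx : x ∈ Set.Icc (0 : ℝ) 1)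
    (hy : y ∈ Set.Icc (0 : ℝ) 1) :
    |g x - g y| ≤ (5 * B / t) * |x - y| ^ α := by
  have ht := h.tpos
  have hB1 := h.one_le
  have hM : (2 : ℝ) ≤ M := by exact_mod_cast h.two_le
  have hM0 : (0 : ℝ) < M := by linarith
  by_cases hxy : x = y
  · subst hxy
    simp [Real.zero_rpow hα.ne']
  have hd : 0 < |x - y| := abs_pos.2 (sub_ne_zero.2 hxy)
  have hd1 : |x - y| ≤ 1 := by
    rw [abs_le]; constructor <;> linarith [hx.1, hx.2, hy.1, hy.2]
  obtain ⟨l, l1, l2⟩ := exists_nat_pow_near_of_lt_one hd hd1 (y := (M : ℝ)⁻¹) (by positivity)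
    (inv_lt_one_of_one_lt₀ (by linarith))
  have hMl : ((M : ℝ)⁻¹ ^ (l + 1)) ^ α = t ^ (l + 1) := by
    rw [hta, ← Real.rpow_natCast, ← Real.rpow_mul (by positivity), Real.inv_rpow (by positivity),
      ← Real.rpow_neg (by positivity), ← Real.rpow_natCast ((M : ℝ) ^ (-α)),
      ← Real.rpow_mul (by positivity)]
    congr 1; ring
  have i1 : t ^ (l + 1) ≤ |x - y| ^ α := by
    rw [← hMl]
    exact Real.rpow_le_rpow (by positivity) l1.le hα.le
  have i2 : |g x - g y| ≤ 5 * B * t ^ l := by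
    have e : g x - g y = (g x - D l x) + (D l x - D l y) - (g y - D l y) := by ring
    have a1 := S.appD l x
    have a2 := S.appD l y
    have a3 := S.lip l x y
    have a4 : B * (t * M) ^ l * |x - y| ≤ B * t ^ l := by
      calc _ ≤ B * (t * M) ^ l * (M : ℝ)⁻¹ ^ l := by gcongr
        _ = B * t ^ l := by
          rw [mul_pow, inv_pow]; field_simp
    rw [e]
    refine (abs_sub _ _).trans ?_
    have := abs_add_le (g x - D l x) (D l x - D l y)
    linarith
  calc _ ≤ 5 * B * t ^ l := i2
    _ = (5 * B / t) * t ^ (l + 1) := by field_simp; ring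
    _ ≤ _ := by gcongr

theorem card_good_zero (h : Par M t B) (F D : ℝ → ℝ) (m b : ℝ) :
    (goodSet M t B 0 F D m b).card ≤ 2 := by
  classical
  rw [goodSet]
  refine (Finset.card_filter_le _ _).trans ?_
  simp

theorem Sys.test (S : Sys M t B w m b F D f g) (h : Par M t B) (hw : ∑' τ, w τ ≤ 1) (l : ℕ)
    (τ : ι) : w τ * ENNReal.ofReal
      (Real.exp (((goodSet M t B l (F l) (D l) (m τ) (b τ)).card : ℝ) / (2 * M))) ≤ 3 := by
  have hM : (2 : ℝ) ≤ M := by exact_mod_cast h.two_le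
  calc _ ≤ pot M t B w m b l (F l) (D l) := ENNReal.le_tsum τ
    _ ≤ pot M t B w m b 0 (F 0) (D 0) := S.pot_le l
    _ ≤ ∑' τ, w τ * 3 := by
        apply ENNReal.tsum_le_tsum
        intro σ
        refine mul_le_mul' le_rfl ?_
        rw [← ENNReal.ofReal_ofNat 3]
        apply ENNReal.ofReal_le_ofReal
        have : ((goodSet M t B 0 (F 0) (D 0) (m σ) (b σ)).card : ℝ) ≤ 2 := by
          exact_mod_cast card_good_zero h _ _ _ _
        calc _ ≤ Real.exp 1 := by
              apply Real.exp_le_exp.2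
              rw [div_le_one (by linarith)]; linarith
          _ ≤ 3 := by linarith [Real.exp_one_lt_d9]
    _ = (∑' τ, w τ) * 3 := ENNReal.tsum_mul_right
    _ ≤ 1 * 3 := by gcongr
    _ = 3 := one_mul _

end

end Rough

namespace Rough

section
variable {ι : Type} {M : ℕ} {t B : ℝ} {w : ι → ENNReal} {m b : ι → ℝ} {F D : ℕ → ℝ → ℝ}
  {f g : ℝ → ℝ}

theorem card_le_two (s : Finset ℕ) (hs : ∀ a ∈ s, ∀ b ∈ s, a ≤ b + 1) : s.card ≤ 2 := by
  rcases s.eq_empty_or_nonempty with h | h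
  · simp [h]
  · have : s ⊆ {s.min' h, s.min' h + 1} := by
      intro a ha
      have h1 := s.min'_le a ha
      have h2 := hs a ha _ (s.min'_mem h)
      simp only [Finset.mem_insert, Finset.mem_singleton]
      omega
    exact (Finset.card_le_card this).trans Finset.card_le_two

theorem mvt_eq (G G' : ℝ → ℝ) (hG : ∀ x, HasDerivAt G (G' x) x) (x y : ℝ) :
    ∃ z, |z - x| ≤ |y - x| ∧ G y - G x = G' z * (y - x) := by
  rcases lt_trichotomy x y with h | h | h
  · obtain ⟨z, hz, e⟩ := exists_hasDerivAt_eq_slope G G' h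
      (fun u _ => (hG u).continuousAt.continuousWithinAt) (fun u _ => hG u)
    refine ⟨z, ?_, ?_⟩
    · rw [abs_of_pos (by linarith [hz.1]), abs_of_pos (by linarith)]; linarith [hz.2]
    · rw [e, div_mul_cancel₀]; linarith
  · subst h
    exact ⟨x, by simp, by simp⟩
  · obtain ⟨z, hz, e⟩ := exists_hasDerivAt_eq_slope G G' h
      (fun u _ => (hG u).continuousAt.continuousWithinAt) (fun u _ => hG u)
    refine ⟨z, ?_, ?_⟩
    · rw [abs_of_neg (by linarith [hz.2]), abs_of_neg (by linarith)]; linarith [hz.1]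
    · rw [e, ← neg_sub x y, mul_neg, div_mul_cancel₀]
      · ring
      · linarith

theorem floor_close {x y : ℝ} {M l : ℕ} (hx : 0 ≤ x) (hy : 0 ≤ y)
    (hd : |x - y| * (M : ℝ) ^ l ≤ 1) :
    ⌊x * (M : ℝ) ^ l⌋₊ ≤ ⌊y * (M : ℝ) ^ l⌋₊ + 1 := by
  have h1 : x * (M : ℝ) ^ l ≤ y * (M : ℝ) ^ l + 1 := by
    have : (x - y) * (M : ℝ) ^ l ≤ |x - y| * (M : ℝ) ^ l := by
      gcongr; exact le_abs_self _
    linarith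
  have : ⌊x * (M : ℝ) ^ l⌋₊ ≤ ⌊y * (M : ℝ) ^ l + 1⌋₊ := Nat.floor_mono h1
  rwa [Nat.floor_add_one (by positivity)] at this

theorem cell_dist {x y : ℝ} {M l : ℕ} (hM : 0 < M) (hx : 0 ≤ x) (hy : 0 ≤ y)
    (hf : ⌊x * (M : ℝ) ^ l⌋₊ = ⌊y * (M : ℝ) ^ l⌋₊) : |x - y| * (M : ℝ) ^ l ≤ 1 := by
  obtain ⟨a1, a2⟩ := floor_bounds hx hf
  obtain ⟨b1, b2⟩ := floor_bounds hy (rfl : ⌊y * (M : ℝ) ^ l⌋₊ = _)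
  have : |x - y| * (M : ℝ) ^ l = |x * (M : ℝ) ^ l - y * (M : ℝ) ^ l| := by
    rw [← sub_mul, abs_mul, abs_of_nonneg (by positivity : (0 : ℝ) ≤ (M : ℝ) ^ l)]
  rw [this, abs_le]
  constructor <;> linarith

theorem Sys.steep (S : Sys M t B w m b F D f g) (h : Par M t B) (l n : ℕ) (hln : l ≤ n)
    (m' b' x y : ℝ) (hx : 0 ≤ x) (hy : 0 ≤ y)
    (hf : ⌊y * (M : ℝ) ^ l⌋₊ = ⌊x * (M : ℝ) ^ l⌋₊)
    (hs : (3 * B + 6) * t ^ l < |D l x - m'|)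
    (h1 : |f x - (b' + m' * x)| ≤ 3 * (t / M) ^ n)
    (h2 : |f y - (b' + m' * y)| ≤ 3 * (t / M) ^ n) :
    |y - x| * (M : ℝ) ^ n ≤ 1 := by
  have ht := h.tpos
  have ht2 := h.thalf
  have hB1 := h.one_le
  have hM2 := h.two_le
  have hM0 : (0 : ℝ) < M := by exact_mod_cast (by omega : 0 < M)
  have hcell := cell_dist (by omega) hy hx hf
  have hder : ∀ x, HasDerivAt (fun z => f z - (b' + m' * z)) (g x - m') x := fun x => by
    have : HasDerivAt (fun z : ℝ => b' + m' * z) m' x := by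
      simpa using ((hasDerivAt_id x).const_mul m').const_add b'
    exact (S.derf x).fun_sub this
  obtain ⟨z, hz, e⟩ := mvt_eq _ _ hder x y
  have a1 : |D l x - D l z| ≤ B * t ^ l := by
    refine (S.lip l x z).trans ?_
    have : |x - z| * (M : ℝ) ^ l ≤ 1 := by
      rw [abs_sub_comm]
      refine le_trans ?_ hcell
      gcongr
    calc _ = B * t ^ l * (|x - z| * (M : ℝ) ^ l) := by rw [mul_pow]; ring
      _ ≤ B * t ^ l * 1 := by gcongr
      _ = _ := mul_one _
  have a2 := S.appD l z
  have a3 : 6 * t ^ l ≤ |g z - m'| := by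
    have e2 : D l x - m' = (D l x - D l z) - (g z - D l z) + (g z - m') := by ring
    have := abs_add_le ((D l x - D l z) - (g z - D l z)) (g z - m')
    rw [← e2] at this
    have := abs_sub (D l x - D l z) (g z - D l z)
    nlinarith
  have a4 : |g z - m'| * |y - x| ≤ 6 * (t / M) ^ n := by
    rw [← abs_mul, ← e]
    refine (abs_sub _ _).trans ?_
    linarith
  have a5 : 6 * t ^ n ≤ |g z - m'| := by
    refine le_trans ?_ a3
    gcongr 6 * ?_
    exact pow_le_pow_of_le_one ht.le (by linarith) hln
  have a6 : 6 * t ^ n * |y - x| ≤ 6 * (t / M) ^ n := le_trans (by gcongr) a4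
  rw [div_pow] at a6
  have a7 : t ^ n * (|y - x| * (M : ℝ) ^ n) ≤ t ^ n * 1 := by
    have : 6 * t ^ n * |y - x| * (M : ℝ) ^ n ≤ 6 * (t ^ n / (M : ℝ) ^ n) * (M : ℝ) ^ n := by gcongr
    rw [mul_assoc 6 (t ^ n / (M : ℝ) ^ n), div_mul_cancel₀ _ (by positivity)] at this
    nlinarith
  exact le_of_mul_le_mul_left a7 (by positivity)

theorem Sys.count (S : Sys M t B w m b F D f g) (h : Par M t B) (n : ℕ) (m' b' X : ℝ)
    (hX : ∀ l, ((goodSet M t B l (F l) (D l) m' b').card : ℝ) ≤ X)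
    (s : Finset ℕ) (hs : ∀ j ∈ s, ∃ x : ℝ, 0 ≤ x ∧ x ≤ 1 ∧ ⌊x * (M : ℝ) ^ n⌋₊ = j ∧
      |f x - (b' + m' * x)| ≤ 3 * (t / M) ^ n) :
    (s.card : ℝ) ≤ X + (n + 1) * (2 * (M * (X + 2))) := by
  classical
  have ht := h.tpos
  have ht2 := h.thalf
  have hB1 := h.one_le
  have hM2 := h.two_le
  have hM0 : 0 < M := by omega
  have hMr : (2 : ℝ) ≤ M := by exact_mod_cast hM2
  have hX0 : 0 ≤ X := le_trans (by positivity) (hX 0)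
  have hs' : ∀ j, ∃ x : ℝ, j ∈ s → 0 ≤ x ∧ x ≤ 1 ∧ ⌊x * (M : ℝ) ^ n⌋₊ = j ∧
      |f x - (b' + m' * x)| ≤ 3 * (t / M) ^ n := by
    intro j
    by_cases hj : j ∈ s
    · obtain ⟨x, hx⟩ := hs j hj
      exact ⟨x, fun _ => hx⟩
    · exact ⟨0, fun hh => absurd hh hj⟩
  choose x hx using hs'
  have hval : ∀ l ≤ n, ∀ j ∈ s, |F l (x j) - (b' + m' * x j)| ≤ (2 * B + 3) * (t / M) ^ l := by
    intro l hl j hj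
    have a1 := S.appF l (x j)
    have a2 := (hx j hj).2.2.2
    have a3 : (t / M) ^ n ≤ (t / M) ^ l := by
      apply pow_le_pow_of_le_one (by positivity) _ hl
      rw [div_le_one (by linarith)]; linarith
    have e : F l (x j) - (b' + m' * x j) = (f (x j) - (b' + m' * x j)) - (f (x j) - F l (x j)) := by
      ring
    rw [e]
    refine (abs_sub _ _).trans ?_
    linarith
  set st : ℕ → ℕ → Prop := fun l j => (3 * B + 6) * t ^ l < |D l (x j) - m'| with hst
  set sl : ℕ → Finset ℕ := fun l => s.filter (fun j => st l j ∧ ∀ l' < l, ¬ st l' j) with hsl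
  have hgood : ∀ l ≤ n, ∀ j ∈ s, ¬ st l j →
      ⌊x j * (M : ℝ) ^ l⌋₊ ∈ goodSet M t B l (F l) (D l) m' b' := by
    intro l hl j hj hns
    rw [goodSet, Finset.mem_filter]
    exact ⟨floor_mem (hx j hj).2.1, x j, (hx j hj).1, (hx j hj).2.1, rfl, hval l hl j hj,
      not_lt.1 hns⟩
  have hsub : s ⊆ goodSet M t B n (F n) (D n) m' b' ∪ (Finset.range (n + 1)).biUnion sl := by
    intro j hj
    rw [Finset.mem_union, Finset.mem_biUnion]
    by_cases hex : ∃ l, l ≤ n ∧ st l j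
    · right
      obtain ⟨l1, l2⟩ := Nat.find_spec hex
      refine ⟨Nat.find hex, Finset.mem_range.2 (by omega), ?_⟩
      rw [hsl, Finset.mem_filter]
      refine ⟨hj, l2, fun l' hl' hc => Nat.find_min hex hl' ⟨by omega, hc⟩⟩
    · left
      have := hgood n le_rfl j hj (fun hc => hex ⟨n, le_rfl, hc⟩)
      rwa [(hx j hj).2.2.1] at this
  have hcard : ∀ l ∈ Finset.range (n + 1), ((sl l).card : ℝ) ≤ 2 * (M * (X + 2)) := by
    intro l hl
    rw [Finset.mem_range] at hl
    have c1 : (sl l).card ≤ 2 * ((sl l).image (fun j => ⌊x j * (M : ℝ) ^ l⌋₊)).card := by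
      apply Finset.card_le_mul_card_image
      intro i _
      apply card_le_two
      intro j hj k hk
      rw [Finset.mem_filter] at hj hk
      have hjs := Finset.mem_filter.1 hj.1
      have hks := Finset.mem_filter.1 hk.1
      obtain ⟨j0, j1, jf, jv⟩ := hx j hjs.1
      obtain ⟨k0, k1, kf, kv⟩ := hx k hks.1
      rw [← jf, ← kf]
      apply floor_close j0 k0
      exact S.steep h l n (by omega) m' b' (x k) (x j) k0 j0 (hj.2.trans hk.2.symm) hks.2.1 kv jv
    have c2 : (((sl l).image (fun j => ⌊x j * (M : ℝ) ^ l⌋₊)).card : ℝ) ≤ M * (X + 2) := by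
      rcases l with _ | l
      · have : (sl 0).image (fun j => ⌊x j * (M : ℝ) ^ 0⌋₊) ⊆ Finset.range 2 := by
          intro i hi
          rw [Finset.mem_image] at hi
          obtain ⟨j, hj, rfl⟩ := hi
          have := floor_mem (M := M) (l := 0) (hx j (Finset.mem_filter.1 hj).1).2.1
          simpa using this
        have := Finset.card_le_card this
        rw [Finset.card_range] at this
        have : (((sl 0).image (fun j => ⌊x j * (M : ℝ) ^ 0⌋₊)).card : ℝ) ≤ 2 := by
          exact_mod_cast this
        nlinarith
      · have : (sl (l + 1)).image (fun j => ⌊x j * (M : ℝ) ^ (l + 1)⌋₊) ⊆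
            (goodSet M t B l (F l) (D l) m' b' ×ˢ Finset.range M).image
              (fun p => p.1 * M + p.2) := by
          intro i hi
          rw [Finset.mem_image] at hi
          obtain ⟨j, hj, rfl⟩ := hi
          have hj' := Finset.mem_filter.1 hj
          have hg := hgood l (by omega) j hj'.1 (hj'.2.2 l (by omega))
          rw [floor_parent hM0] at hg
          rw [Finset.mem_image]
          refine ⟨(_, ⌊x j * (M : ℝ) ^ (l + 1)⌋₊ % M), Finset.mem_product.2
            ⟨hg, Finset.mem_range.2 (Nat.mod_lt _ hM0)⟩, ?_⟩
          exact Nat.div_add_mod' _ _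
        have h3 := (Finset.card_le_card this).trans Finset.card_image_le
        rw [Finset.card_product, Finset.card_range] at h3
        have h4 : (((sl (l + 1)).image (fun j => ⌊x j * (M : ℝ) ^ (l + 1)⌋₊)).card : ℝ) ≤
            ((goodSet M t B l (F l) (D l) m' b').card : ℝ) * M := by exact_mod_cast h3
        have := hX l
        nlinarith
    have c1' : ((sl l).card : ℝ) ≤
        2 * (((sl l).image (fun j => ⌊x j * (M : ℝ) ^ l⌋₊)).card : ℝ) := by exact_mod_cast c1
    linarith
  have f1 : s.card ≤ (goodSet M t B n (F n) (D n) m' b').card +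
      ∑ l ∈ Finset.range (n + 1), (sl l).card :=
    (Finset.card_le_card hsub).trans ((Finset.card_union_le _ _).trans
      (Nat.add_le_add_left Finset.card_biUnion_le _))
  have f2 : (s.card : ℝ) ≤ ((goodSet M t B n (F n) (D n) m' b').card : ℝ) +
      ∑ l ∈ Finset.range (n + 1), ((sl l).card : ℝ) := by exact_mod_cast f1
  have f3 := Finset.sum_le_sum hcard
  rw [Finset.sum_const, Finset.card_range, nsmul_eq_mul] at f3
  push_cast at f3
  linarith [hX n]

theorem exists_net (h : Par M t B) (W : ℝ) (hW : 0 ≤ W) :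
    ∃ (κ : Type) (w : κ → ENNReal) (m b : κ → ℝ) (K : ℝ), ∑' τ, w τ ≤ 1 ∧ 0 ≤ K ∧
      ∀ F D f g, Sys M t B w m b F D f g → ∀ (n : ℕ) (m0 b0 : ℝ), |m0| ≤ W → |b0| ≤ W →
        ∃ m' b', |m0 - m'| ≤ (t / M) ^ n / 2 ∧ |b0 - b'| ≤ (t / M) ^ n / 2 ∧
          ∀ l, ((goodSet M t B l (F l) (D l) m' b').card : ℝ) ≤ K * (n + 1) := by
  have ht := h.tpos
  have hM2 := h.two_le
  have hM0 : (0 : ℝ) < M := by exact_mod_cast (by omega : 0 < M)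
  obtain ⟨Q, hQ⟩ := exists_nat_gt (max (4 * W + 1) (M / t))
  have hQ1 : 4 * W + 1 < Q := (le_max_left _ _).trans_lt hQ
  have hQ2 : M / t < Q := (le_max_right _ _).trans_lt hQ
  have hQ0 : (1 : ℝ) < Q := by linarith
  have hv : ∀ (n : ℕ) (y : ℝ), |y| ≤ W → ∃ p : Fin (Q ^ (n + 1)),
      |y - (-W + p.val * ((t / M) ^ n / 2))| ≤ (t / M) ^ n / 2 := by
    intro n y hy
    have hη : 0 < (t / M) ^ n / 2 := by positivity
    rw [abs_le] at hy
    set η := (t / M) ^ n / 2 with hηd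
    have hq0 : 0 ≤ (y + W) / η := div_nonneg (by linarith) hη.le
    have f1 := Nat.floor_le hq0
    have f2 := Nat.lt_floor_add_one ((y + W) / η)
    have f3 : ⌊(y + W) / η⌋₊ < Q ^ (n + 1) := by
      have : (y + W) / η < (Q : ℝ) ^ (n + 1) := by
        calc (y + W) / η ≤ (2 * W) / η := by gcongr; linarith
          _ = 4 * W * (M / t) ^ n := by
            rw [hηd, div_pow, div_pow]; field_simp; ring
          _ ≤ 4 * W * (Q : ℝ) ^ n := by gcongr
          _ < Q * (Q : ℝ) ^ n := by gcongr; linarith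
          _ = _ := by ring
      have h3 : (⌊(y + W) / η⌋₊ : ℝ) < ((Q ^ (n + 1) : ℕ) : ℝ) := by
        push_cast; linarith
      exact_mod_cast h3
    refine ⟨⟨_, f3⟩, ?_⟩
    dsimp only
    rw [le_div_iff₀ hη] at f1
    rw [div_lt_iff₀ hη] at f2
    rw [abs_le]
    constructor <;> nlinarith
  let κ : Type := Σ n : ℕ, Fin (Q ^ (n + 1)) × Fin (Q ^ (n + 1))
  have hsum : ∑' τ : κ, ENNReal.ofReal ((1 / 2) ^ (τ.1 + 1) / ((Q : ℝ) ^ (τ.1 + 1)) ^ 2) ≤ 1 := by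
    refine (ENNReal.tsum_sigma (fun (n : ℕ) (_ : Fin (Q ^ (n + 1)) × Fin (Q ^ (n + 1))) =>
      ENNReal.ofReal ((1 / 2) ^ (n + 1) / ((Q : ℝ) ^ (n + 1)) ^ 2))).trans_le ?_
    have : ∀ n : ℕ, ∑' _c : Fin (Q ^ (n + 1)) × Fin (Q ^ (n + 1)),
        ENNReal.ofReal ((1 / 2) ^ (n + 1) / ((Q : ℝ) ^ (n + 1)) ^ 2) =
        ENNReal.ofReal ((1 / 2) ^ n * (1 / 2)) := by
      intro n
      rw [tsum_fintype, Finset.sum_const, Finset.card_univ, Fintype.card_prod, Fintype.card_fin,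
        nsmul_eq_mul, ← ENNReal.ofReal_natCast, ← ENNReal.ofReal_mul (by positivity)]
      congr 1
      push_cast
      field_simp
      ring
    simp only [this]
    rw [← ENNReal.ofReal_tsum_of_nonneg (fun n => by positivity)
      (summable_geometric_two.mul_right _), tsum_mul_right, tsum_geometric_two]
    norm_num
  refine ⟨κ, fun τ => ENNReal.ofReal ((1 / 2) ^ (τ.1 + 1) / ((Q : ℝ) ^ (τ.1 + 1)) ^ 2),
    fun τ => -W + τ.2.1.val * ((t / M) ^ τ.1 / 2), fun τ => -W + τ.2.2.val * ((t / M) ^ τ.1 / 2),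
    2 * M * (Real.log 3 + Real.log (2 * Q ^ 2)), hsum, ?_, ?_⟩
  · have : 0 ≤ Real.log 3 := Real.log_nonneg (by norm_num)
    have : 0 ≤ Real.log (2 * Q ^ 2) := Real.log_nonneg (by nlinarith)
    positivity
  · intro F D f g S n m0 b0 hm0 hb0
    obtain ⟨p, hp⟩ := hv n m0 hm0
    obtain ⟨q, hq⟩ := hv n b0 hb0
    refine ⟨_, _, hp, hq, fun l => ?_⟩
    have hT := S.test h hsum l ⟨n, p, q⟩
    dsimp only at hT
    rw [← ENNReal.ofReal_mul (by positivity), ← ENNReal.ofReal_ofNat 3,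
      ENNReal.ofReal_le_ofReal_iff (by norm_num)] at hT
    set X : ℝ := ((goodSet M t B l (F l) (D l) (-W + p.val * ((t / M) ^ n / 2))
      (-W + q.val * ((t / M) ^ n / 2))).card : ℝ)
    have hE : Real.exp (X / (2 * M)) ≤ 3 * (2 * Q ^ 2) ^ (n + 1) := by
      have e : (1 / 2 : ℝ) ^ (n + 1) / ((Q : ℝ) ^ (n + 1)) ^ 2 = 1 / (2 * Q ^ 2) ^ (n + 1) := by
        rw [mul_pow, ← pow_mul, ← pow_mul, mul_comm (n + 1) 2]
        field_simp
        rw [← mul_pow]; norm_num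
      rw [e, one_div, inv_mul_le_iff₀ (by positivity)] at hT
      linarith
    have hL := Real.log_le_log (Real.exp_pos _) hE
    rw [Real.log_exp, Real.log_mul (by norm_num) (by positivity), Real.log_pow,
      div_le_iff₀ (by positivity)] at hL
    have h3 : 0 ≤ Real.log 3 := Real.log_nonneg (by norm_num)
    push_cast at hL
    have : 0 ≤ Real.log 3 * n := by positivity
    have : 0 ≤ Real.log 3 * n * (2 * M) := by positivity
    nlinarith

/-- The key property: few cells of level `n` carry points close to a line. -/
def Prop1 (M : ℕ) (t Λ C : ℝ) (f : ℝ → ℝ) : Prop :=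
  ∀ (n : ℕ) (m b : ℝ), |m| ≤ Λ → ∀ s : Finset ℕ,
    (∀ j ∈ s, ∃ x : ℝ, 0 ≤ x ∧ x ≤ 1 ∧ ⌊x * (M : ℝ) ^ n⌋₊ = j ∧
      |f x - (b + m * x)| ≤ 2 * (t / M) ^ n) → (s.card : ℝ) ≤ C * (n + 1) ^ 2

theorem exists_f {ψ ψ' : ℝ → ℝ} (hB : Bump ψ ψ' B) (h : Par M t B) (α : ℝ) (hα : 0 < α)
    (hα1 : α < 1) (hta : t = (M : ℝ) ^ (-α)) :
    ∃ (f g : ℝ → ℝ) (C : ℝ), 0 ≤ C ∧ (∀ x, HasDerivAt f (g x) x) ∧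
      (∀ x ∈ Set.Icc (0 : ℝ) 1, ∀ y ∈ Set.Icc (0 : ℝ) 1,
        |g x - g y| ≤ (5 * B / t) * |x - y| ^ α) ∧
      (∀ x y, |f x - f y| ≤ 2 * B * |x - y|) ∧ Prop1 M t (2 * B) C f := by
  have ht := h.tpos
  have ht2 := h.thalf
  have hB1 := h.one_le
  have hM2 := h.two_le
  have hMr : (2 : ℝ) ≤ M := by exact_mod_cast hM2
  obtain ⟨κ, w, m, b, K, hw, hK, hnet⟩ := exists_net h (4 * B + 2) (by linarith)
  obtain ⟨F, D, f, g, S⟩ := exists_Sys w m b hB h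
  refine ⟨f, g, K + 2 * (M * (K + 2)), by positivity, S.derf,
    fun x hx y hy => S.holder h α hα hα1 hta x y hx hy, S.f_lip, ?_⟩
  intro n m0 b0 hm0 s hs
  rcases s.eq_empty_or_nonempty with he | ⟨j0, hj0⟩
  · rw [he]; simp only [Finset.card_empty, Nat.cast_zero]; positivity
  have htM1 : t / M ≤ 1 := by
    rw [div_le_one (by linarith)]; linarith
  have hpow : (t / M) ^ n ≤ 1 := pow_le_one₀ (by positivity) htM1
  have hb0 : |b0| ≤ 4 * B + 2 := by
    obtain ⟨x, x0, x1, _, hv⟩ := hs j0 hj0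
    have a1 := S.f_bd x
    have a2 : |m0 * x| ≤ 2 * B := by
      rw [abs_mul, abs_of_nonneg x0]
      calc |m0| * x ≤ 2 * B * 1 := by gcongr
        _ = _ := mul_one _
    rw [abs_le] at *
    constructor <;> linarith [hv.1, hv.2, a1.1, a1.2, a2.1, a2.2]
  obtain ⟨m', b', hm', hb', hX⟩ := hnet F D f g S n m0 b0 (by linarith) hb0
  have := S.count h n m' b' _ hX s (by
    intro j hj
    obtain ⟨x, x0, x1, xf, hv⟩ := hs j hj
    refine ⟨x, x0, x1, xf, ?_⟩
    have e : f x - (b' + m' * x) = (f x - (b0 + m0 * x)) + (b0 - b') + (m0 - m') * x := by ring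
    have a2 : |(m0 - m') * x| ≤ (t / M) ^ n / 2 := by
      rw [abs_mul, abs_of_nonneg x0]
      calc |m0 - m'| * x ≤ (t / M) ^ n / 2 * 1 := by gcongr
        _ = _ := mul_one _
    rw [e]
    refine (abs_add_le _ _).trans ?_
    have := abs_add_le (f x - (b0 + m0 * x)) (b0 - b')
    linarith)
  refine this.trans ?_
  have hn : (1 : ℝ) ≤ n + 1 := by linarith [Nat.cast_nonneg (α := ℝ) n]
  have e1 : K * (n + 1) ≤ K * (n + 1) ^ 2 := by
    gcongr; nlinarith
  have e2 : (K * (n + 1) + 2) ≤ (K + 2) * ((n : ℝ) + 1) := by nlinarith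
  calc _ ≤ K * (n + 1) ^ 2 + (n + 1) * (2 * (M * ((K + 2) * (n + 1)))) := by gcongr
    _ = _ := by ring

end

end Rough

namespace Rough

open Classical in
/-- Cells of level `n` in base `M` meeting `A`. -/
noncomputable def cells (M n : ℕ) (A : Set ℝ) : Finset ℕ :=
  (Finset.range (M ^ n + 1)).filter (fun j => ∃ x ∈ A, ⌊x * (M : ℝ) ^ n⌋₊ = j)

theorem mem_cells {M n : ℕ} {A : Set ℝ} (hA : A ⊆ Set.Icc 0 1) {j : ℕ} :
    j ∈ cells M n A ↔ ∃ x ∈ A, ⌊x * (M : ℝ) ^ n⌋₊ = j := by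
  classical
  rw [cells, Finset.mem_filter]
  constructor
  · exact fun h => h.2
  · rintro ⟨x, hx, hj⟩
    exact ⟨hj ▸ floor_mem (hA hx).2, x, hx, hj⟩

theorem floor_anc {x : ℝ} {M l τ : ℕ} (hM : 0 < M) :
    ⌊x * (M : ℝ) ^ l⌋₊ = ⌊x * (M : ℝ) ^ (l + τ)⌋₊ / M ^ τ := by
  rw [← Nat.floor_div_natCast]
  congr 1
  push_cast
  have : (M : ℝ) ≠ 0 := by positivity
  rw [pow_add, ← mul_assoc, mul_div_assoc, div_self (by positivity), mul_one]

/-- Slopes of consecutive chords increase. -/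
def Cvx (f : ℝ → ℝ) (A : Set ℝ) : Prop :=
  ∀ x ∈ A, ∀ y ∈ A, ∀ z ∈ A, x < y → y < z → (f y - f x) / (y - x) ≤ (f z - f y) / (z - y)

theorem fiber_card {M l τ : ℕ} (hM : 0 < M) (s : Finset ℕ) (i : ℕ) :
    (s.filter (fun j => j / M ^ τ = i)).card ≤ M ^ τ := by
  have hp : 0 < M ^ τ := by positivity
  have : s.filter (fun j => j / M ^ τ = i) ⊆ (Finset.range (M ^ τ)).image (fun r => M ^ τ * i + r) := by
    intro j hj
    rw [Finset.mem_filter] at hj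
    rw [Finset.mem_image]
    refine ⟨j % M ^ τ, Finset.mem_range.2 (Nat.mod_lt _ hp), ?_⟩
    rw [← hj.2]
    exact Nat.div_add_mod _ _
  refine (Finset.card_le_card this).trans (Finset.card_image_le.trans ?_)
  rw [Finset.card_range]

theorem card_sep (s : Finset ℕ) (lo : ℕ → ℝ) (Λ δ : ℝ) (hδ : 0 < δ) (hΛ : 0 ≤ Λ)
    (hlo : ∀ i ∈ s, |lo i| ≤ Λ) (hsep : ∀ i ∈ s, ∀ j ∈ s, i < j → lo i + δ ≤ lo j) :
    (s.card : ℝ) ≤ 2 * Λ / δ + 1 := by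
  have hq : ∀ i ∈ s, 0 ≤ (lo i + Λ) / δ := fun i hi => by
    have := abs_le.1 (hlo i hi)
    exact div_nonneg (by linarith) hδ.le
  have hmono : ∀ i ∈ s, ∀ j ∈ s, i < j → ⌊(lo i + Λ) / δ⌋₊ < ⌊(lo j + Λ) / δ⌋₊ := by
    intro i hi j hj hij
    have : (lo i + Λ) / δ + 1 ≤ (lo j + Λ) / δ := by
      rw [div_add_one hδ.ne']
      apply div_le_div_of_nonneg_right _ hδ.le
      linarith [hsep i hi j hj hij]
    have := Nat.floor_mono this
    rw [Nat.floor_add_one (hq i hi)] at this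
    omega
  have hc : s.card ≤ (Finset.range (⌊2 * Λ / δ⌋₊ + 1)).card := by
    apply Finset.card_le_card_of_injOn (fun i => ⌊(lo i + Λ) / δ⌋₊)
    · intro i hi
      rw [Finset.mem_coe, Finset.mem_range, Nat.lt_succ_iff]
      apply Nat.floor_mono
      gcongr
      linarith [(abs_le.1 (hlo i hi)).2]
    · intro i hi j hj hij
      dsimp only at hij
      rcases lt_trichotomy i j with h | h | h
      · have := hmono i hi j hj h; omega
      · exact h
      · have := hmono j hj i hi h; omega
  rw [Finset.card_range] at hc
  have h1 : (s.card : ℝ) ≤ (⌊2 * Λ / δ⌋₊ : ℝ) + 1 := by exact_mod_cast hc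
  have := Nat.floor_le (a := 2 * Λ / δ) (by positivity)
  linarith

theorem cells_rec {M : ℕ} {t Λ C : ℝ} {f : ℝ → ℝ} {A : Set ℝ} (hM : 1 ≤ M) (ht : 0 < t)
    (ht1 : t ≤ 1) (hΛ : 0 ≤ Λ) (hC : 0 ≤ C)
    (hf : ∀ x y, |f x - f y| ≤ Λ * |x - y|) (hP : Prop1 M t Λ C f) (hA : A ⊆ Set.Icc 0 1)
    (hcv : Cvx f A) (l τ : ℕ) :
    ((cells M (l + τ) A).card : ℝ) ≤ (2 * Λ + 1) * (M : ℝ) ^ (2 * τ) * (1 / t) ^ (l + τ)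
      + C * ((l + τ : ℕ) + 1) ^ 2 * (cells M l A).card := by
  classical
  have hM0 : (1 : ℝ) ≤ M := by exact_mod_cast hM
  set δ : ℝ := t ^ (l + τ) / (M : ℝ) ^ τ with hδ
  have hδ0 : 0 < δ := by positivity
  set T1 : ℕ → Prop := fun i => ∃ x y z w : ℝ, x ∈ A ∧ y ∈ A ∧ z ∈ A ∧ w ∈ A ∧
    ⌊x * (M : ℝ) ^ l⌋₊ = i ∧ ⌊y * (M : ℝ) ^ l⌋₊ = i ∧ ⌊z * (M : ℝ) ^ l⌋₊ = i ∧
    ⌊w * (M : ℝ) ^ l⌋₊ = i ∧ x < y ∧ z < w ∧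
    (f y - f x) / (y - x) + δ < (f w - f z) / (w - z) with hT1
  have hslope : ∀ x y : ℝ, x < y → |(f y - f x) / (y - x)| ≤ Λ := by
    intro x y hxy
    rw [abs_div, div_le_iff₀ (abs_pos.2 (by linarith))]
    exact hf y x
  have hlt : ∀ i j : ℕ, ∀ x y : ℝ, ⌊x * (M : ℝ) ^ l⌋₊ = i → ⌊y * (M : ℝ) ^ l⌋₊ = j → i < j →
      x < y := by
    intro i j x y hx hy hij
    by_contra hc
    push Not at hc
    have : ⌊y * (M : ℝ) ^ l⌋₊ ≤ ⌊x * (M : ℝ) ^ l⌋₊ := Nat.floor_mono (by gcongr)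
    omega
  set s1 := (cells M l A).filter T1 with hs1
  set s2 := (cells M l A).filter (fun i => ¬ T1 i) with hs2
  have hc1 : (s1.card : ℝ) ≤ 2 * Λ / δ + 1 := by
    have : ∀ i, ∃ x y z w : ℝ, T1 i → x ∈ A ∧ y ∈ A ∧ z ∈ A ∧ w ∈ A ∧
        ⌊x * (M : ℝ) ^ l⌋₊ = i ∧ ⌊y * (M : ℝ) ^ l⌋₊ = i ∧ ⌊z * (M : ℝ) ^ l⌋₊ = i ∧
        ⌊w * (M : ℝ) ^ l⌋₊ = i ∧ x < y ∧ z < w ∧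
        (f y - f x) / (y - x) + δ < (f w - f z) / (w - z) := by
      intro i
      by_cases h : T1 i
      · obtain ⟨x, y, z, w, hh⟩ := h
        exact ⟨x, y, z, w, fun _ => hh⟩
      · exact ⟨0, 0, 0, 0, fun hh => absurd hh h⟩
    choose x y z w hw using this
    apply card_sep s1 (fun i => (f (y i) - f (x i)) / (y i - x i)) Λ δ hδ0 hΛ
    · intro i hi
      obtain ⟨-, -, -, -, -, -, -, -, hxy, -, -⟩ := hw i (Finset.mem_filter.1 hi).2
      exact hslope _ _ hxy
    · intro i hi j hj hij
      obtain ⟨-, -, zA, wA, -, -, -, wi, -, hzw, hs⟩ := hw i (Finset.mem_filter.1 hi).2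
      obtain ⟨xA, yA, -, -, xj, -, -, -, hxy, -, -⟩ := hw j (Finset.mem_filter.1 hj).2
      have hwx := hlt i j _ _ wi xj hij
      have i1 := hcv _ zA _ wA _ xA hzw hwx
      have i2 := hcv _ wA _ xA _ yA hwx hxy
      linarith
  have hsum : (cells M (l + τ) A).card =
      ∑ i ∈ cells M l A, ((cells M (l + τ) A).filter (fun j => j / M ^ τ = i)).card := by
    apply Finset.card_eq_sum_card_fiberwise
    intro j hj
    rw [Finset.mem_coe, mem_cells hA] at hj
    obtain ⟨x, hx, hj⟩ := hj
    rw [Finset.mem_coe, mem_cells hA]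
    exact ⟨x, hx, by rw [floor_anc hM, hj]⟩
  have hfib2 : ∀ i ∈ s2, (((cells M (l + τ) A).filter (fun j => j / M ^ τ = i)).card : ℝ) ≤
      C * ((l + τ : ℕ) + 1) ^ 2 := by
    intro i hi
    obtain ⟨hi1, hi2⟩ := Finset.mem_filter.1 hi
    obtain ⟨x0, x0A, x0i⟩ := (mem_cells hA).1 hi1
    obtain ⟨m, hm, hml⟩ : ∃ m, |m| ≤ Λ ∧ ∀ x ∈ A, ⌊x * (M : ℝ) ^ l⌋₊ = i →
        |f x - f x0 - m * (x - x0)| ≤ δ * |x - x0| := by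
      have key : ∀ p q x y : ℝ, p ∈ A → q ∈ A → x ∈ A → y ∈ A → ⌊p * (M : ℝ) ^ l⌋₊ = i →
          ⌊q * (M : ℝ) ^ l⌋₊ = i → ⌊x * (M : ℝ) ^ l⌋₊ = i → ⌊y * (M : ℝ) ^ l⌋₊ = i →
          p < q → x < y → |f y - f x - (f q - f p) / (q - p) * (y - x)| ≤ δ * |y - x| := by
        intro p q x y pA qA xA yA pi qi xi yi hpq hxy
        have n1 : (f q - f p) / (q - p) ≤ (f y - f x) / (y - x) + δ := by
          by_contra hc
          exact hi2 ⟨x, y, p, q, xA, yA, pA, qA, xi, yi, pi, qi, hxy, hpq, not_le.1 hc⟩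
        have n2 : (f y - f x) / (y - x) ≤ (f q - f p) / (q - p) + δ := by
          by_contra hc
          exact hi2 ⟨p, q, x, y, pA, qA, xA, yA, pi, qi, xi, yi, hpq, hxy, not_le.1 hc⟩
        have hd : 0 < y - x := by linarith
        have e : f y - f x - (f q - f p) / (q - p) * (y - x) =
            ((f y - f x) / (y - x) - (f q - f p) / (q - p)) * (y - x) := by
          rw [sub_mul, div_mul_cancel₀ _ hd.ne']
        rw [e, abs_mul]
        gcongr
        rw [abs_le]
        constructor <;> linarith
      by_cases hp : ∃ p q, p ∈ A ∧ q ∈ A ∧ ⌊p * (M : ℝ) ^ l⌋₊ = i ∧ ⌊q * (M : ℝ) ^ l⌋₊ = i ∧ p < q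
      · obtain ⟨p, q, pA, qA, pi, qi, hpq⟩ := hp
        refine ⟨(f q - f p) / (q - p), hslope p q hpq, fun x xA xi => ?_⟩
        rcases lt_trichotomy x x0 with h | h | h
        · have := key p q x x0 pA qA xA x0A pi qi xi x0i hpq h
          rw [abs_sub_comm x x0]
          convert this using 1
          rw [← abs_neg]
          congr 1
          ring
        · subst h; simp
        · exact key p q x0 x pA qA x0A xA pi qi x0i xi hpq h
      · refine ⟨0, by simpa using hΛ, fun x xA xi => ?_⟩
        have : x = x0 := by
          rcases lt_trichotomy x x0 with h | h | h
          · exact absurd ⟨x, x0, xA, x0A, xi, x0i, h⟩ hp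
          · exact h
          · exact absurd ⟨x0, x, x0A, xA, x0i, xi, h⟩ hp
        subst this
        simp
    refine hP (l + τ) m (f x0 - m * x0) hm _ ?_
    intro j hj
    obtain ⟨hj1, hj2⟩ := Finset.mem_filter.1 hj
    obtain ⟨x, xA, xj⟩ := (mem_cells hA).1 hj1
    refine ⟨x, (hA xA).1, (hA xA).2, xj, ?_⟩
    have xi : ⌊x * (M : ℝ) ^ l⌋₊ = i := by rw [floor_anc hM, xj, hj2]
    have h1 := hml x xA xi
    have h2 := cell_dist hM (hA xA).1 (hA x0A).1 (xi.trans x0i.symm)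
    have e : f x - (f x0 - m * x0 + m * x) = f x - f x0 - m * (x - x0) := by ring
    rw [e]
    refine h1.trans ?_
    have e2 : δ * |x - x0| = (t / M) ^ (l + τ) * (|x - x0| * (M : ℝ) ^ l) := by
      rw [hδ, div_pow, pow_add (M : ℝ)]; field_simp
    rw [e2]
    have : 0 ≤ (t / M) ^ (l + τ) := by positivity
    nlinarith
  have hfib1 : ∀ i ∈ s1, (((cells M (l + τ) A).filter (fun j => j / M ^ τ = i)).card : ℝ) ≤
      (M : ℝ) ^ τ := by
    intro i _
    exact_mod_cast fiber_card (l := l) hM (cells M (l + τ) A) i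
  rw [hsum]
  push_cast
  rw [← Finset.sum_filter_add_sum_filter_not (cells M l A) T1]
  have S1 := Finset.sum_le_card_nsmul s1 _ _ hfib1
  have S2 := Finset.sum_le_card_nsmul s2 _ _ hfib2
  rw [nsmul_eq_mul] at S1 S2
  have hs2c : (s2.card : ℝ) ≤ (cells M l A).card := by
    exact_mod_cast Finset.card_filter_le _ _
  have S2' : (s2.card : ℝ) * (C * ((l + τ : ℕ) + 1) ^ 2) ≤
      C * ((l + τ : ℕ) + 1) ^ 2 * (cells M l A).card := by
    rw [mul_comm]; gcongr
  have S1' : (s1.card : ℝ) * (M : ℝ) ^ τ ≤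
      (2 * Λ + 1) * (M : ℝ) ^ (2 * τ) * (1 / t) ^ (l + τ) := by
    have hone : 1 ≤ (M : ℝ) ^ τ * (1 / t) ^ (l + τ) := by
      apply one_le_mul_of_one_le_of_one_le (one_le_pow₀ hM0)
      apply one_le_pow₀
      rw [le_div_iff₀ ht]; linarith
    have e1 : 2 * Λ / δ = 2 * Λ * ((M : ℝ) ^ τ * (1 / t) ^ (l + τ)) := by
      rw [hδ, one_div, inv_pow]; field_simp
    rw [e1] at hc1
    calc _ ≤ ((2 * Λ + 1) * ((M : ℝ) ^ τ * (1 / t) ^ (l + τ))) * (M : ℝ) ^ τ := by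
          gcongr
          linarith
      _ = _ := by rw [two_mul τ, pow_add (M : ℝ)]; ring
  push_cast at S2' S2
  linarith

theorem cells_growth {M : ℕ} {t Λ C α β : ℝ} (hM : 2 ≤ M) (hα : 0 < α) (hβ : α < β)
    (hta : t = (M : ℝ) ^ (-α)) (hΛ : 0 ≤ Λ) (hC : 0 ≤ C) (N : ℕ → ℝ)
    (hN1 : ∀ n, N n ≤ (M : ℝ) ^ n + 1)
    (hrec : ∀ l τ, N (l + τ) ≤ (2 * Λ + 1) * (M : ℝ) ^ (2 * τ) * (1 / t) ^ (l + τ)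
      + C * ((l + τ : ℕ) + 1) ^ 2 * N l) :
    ∃ D : ℝ, 1 ≤ D ∧ ∀ n, N n ≤ D * ((M : ℝ) ^ β) ^ n := by
  have hMr : (2 : ℝ) ≤ M := by exact_mod_cast hM
  have hM0 : (0 : ℝ) < M := by linarith
  set R : ℝ := (M : ℝ) ^ β with hR
  have hR1 : 1 < R := Real.one_lt_rpow (by linarith) (by linarith)
  obtain ⟨q, hq⟩ := exists_nat_gt (2 / (β - α))
  have hq0 : (0 : ℝ) < q := lt_trans (div_pos (by norm_num) (by linarith)) hq
  have hq0' : 0 < q := by exact_mod_cast hq0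
  have hq2 : 2 < (β - α) * q := by
    rw [div_lt_iff₀ (by linarith)] at hq; linarith
  have hev : ∃ τ0 : ℕ, ∀ τ ≥ τ0, C * (q * (τ + 1)) ^ 2 ≤ 1 / 2 * R ^ τ := by
    have h1 := (Filter.tendsto_add_atTop_iff_nat 1).2 (tendsto_pow_const_div_const_pow_of_one_lt 2 hR1)
    have h2 := h1.const_mul (C * q ^ 2 * R)
    rw [mul_zero] at h2
    obtain ⟨τ0, h3⟩ := eventually_atTop.1 (h2.eventually (gt_mem_nhds (by norm_num : (0 : ℝ) < 1 / 2)))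
    refine ⟨τ0, fun τ hτ => ?_⟩
    have h4 := h3 τ hτ
    have hp : 0 < R ^ τ := by positivity
    have e : C * q ^ 2 * R * (((τ + 1 : ℕ) : ℝ) ^ 2 / R ^ (τ + 1)) = C * (q * (τ + 1)) ^ 2 / R ^ τ := by
      push_cast
      rw [pow_succ R]
      field_simp
    rw [e, div_lt_iff₀ hp] at h4
    exact h4.le
  obtain ⟨τ0, hτ0⟩ := hev
  set n0 := q * (τ0 + 1) with hn0
  set D : ℝ := 2 * (2 * Λ + 1) + (M : ℝ) ^ n0 + 1 with hD
  have hMn0 : 0 < (M : ℝ) ^ n0 := by positivity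
  refine ⟨D, by linarith, fun n => ?_⟩
  induction n using Nat.strong_induction_on with
  | _ n ih =>
  have hRn : 1 ≤ R ^ n := one_le_pow₀ hR1.le
  by_cases hn : n < n0
  · have : (M : ℝ) ^ n ≤ (M : ℝ) ^ n0 := pow_le_pow_right₀ (by linarith) hn.le
    have := hN1 n
    calc N n ≤ D * 1 := by linarith
      _ ≤ D * R ^ n := by gcongr
  · push Not at hn
    set τ := n / q with hτ
    have hτge : τ0 + 1 ≤ τ := by
      rw [hτ, Nat.le_div_iff_mul_le hq0', mul_comm]; exact hn
    have hτn : τ ≤ n := Nat.div_le_self _ _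
    have hqτ : q * τ ≤ n := Nat.mul_div_le _ _
    have hnq : n + 1 ≤ q * (τ + 1) := by
      have := Nat.lt_mul_div_succ n hq0'
      rw [← hτ] at this
      omega
    have hnl : n - τ + τ = n := by omega
    have hr := hrec (n - τ) τ
    rw [hnl] at hr
    have hih := ih (n - τ) (by omega)
    have a1 : (M : ℝ) ^ (2 * τ) * (1 / t) ^ n ≤ R ^ n := by
      have e1 : 1 / t = (M : ℝ) ^ α := by
        rw [hta, Real.rpow_neg hM0.le, one_div, inv_inv]
      rw [e1, hR, ← Real.rpow_natCast, ← Real.rpow_natCast ((M : ℝ) ^ α),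
        ← Real.rpow_natCast ((M : ℝ) ^ β), ← Real.rpow_mul hM0.le, ← Real.rpow_mul hM0.le,
        ← Real.rpow_add hM0]
      apply Real.rpow_le_rpow_of_exponent_le (by linarith)
      have hqτ' : (q : ℝ) * τ ≤ n := by exact_mod_cast hqτ
      push_cast
      have : (2 : ℝ) * τ ≤ (β - α) * q * τ := by gcongr
      have : (β - α) * (q * τ) ≤ (β - α) * n := by
        apply mul_le_mul_of_nonneg_left hqτ'; linarith
      nlinarith
    have a2 : C * ((n : ℝ) + 1) ^ 2 ≤ 1 / 2 * R ^ τ := by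
      refine le_trans ?_ (hτ0 τ (by omega))
      have : (n : ℝ) + 1 ≤ q * (τ + 1) := by exact_mod_cast hnq
      gcongr
    have a3 : C * ((n : ℝ) + 1) ^ 2 * N (n - τ) ≤ 1 / 2 * D * R ^ n := by
      calc _ ≤ C * ((n : ℝ) + 1) ^ 2 * (D * R ^ (n - τ)) := by gcongr
        _ ≤ 1 / 2 * R ^ τ * (D * R ^ (n - τ)) := by gcongr
        _ = 1 / 2 * D * (R ^ (n - τ) * R ^ τ) := by ring
        _ = _ := by rw [← pow_add, hnl]
    have a4 : (2 * Λ + 1) * (M : ℝ) ^ (2 * τ) * (1 / t) ^ n ≤ (2 * Λ + 1) * R ^ n := by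
      rw [mul_assoc]; gcongr
    have a5 : (2 * Λ + 1) * R ^ n ≤ 1 / 2 * D * R ^ n := by
      gcongr; linarith
    linarith

theorem gridCount_le {A : Set ℝ} (hA : A ⊆ Set.Icc 0 1) (k : ℕ) :
    gridCount 2 k A ≤ 2 * (cells 2 k A).card := by
  classical
  have hsub : {j : ℕ | 1 ≤ j ∧ j ≤ 2 ^ k ∧
      (A ∩ Set.Icc (((j : ℝ) - 1) / ((2 : ℕ) : ℝ) ^ k) ((j : ℝ) / ((2 : ℕ) : ℝ) ^ k)).Nonempty} ⊆
      (((cells 2 k A) ×ˢ Finset.range 2).image (fun p => p.1 + p.2) : Finset ℕ) := by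
    rintro j ⟨j1, j2, x, xA, x1, x2⟩
    have hp : (0 : ℝ) < ((2 : ℕ) : ℝ) ^ k := by positivity
    rw [div_le_iff₀ hp] at x1
    rw [le_div_iff₀ hp] at x2
    obtain ⟨f1, f2⟩ := floor_bounds (M := 2) (l := k) (hA xA).1 rfl
    set i := ⌊x * ((2 : ℕ) : ℝ) ^ k⌋₊ with hi
    have g1 : (i : ℝ) ≤ j := by linarith
    have g2 : (j : ℝ) < i + 2 := by linarith
    have g1' : i ≤ j := by exact_mod_cast g1
    have g2' : j < i + 2 := by exact_mod_cast g2
    rw [Finset.mem_coe, Finset.mem_image]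
    refine ⟨(i, j - i), Finset.mem_product.2 ⟨(mem_cells hA).2 ⟨x, xA, hi.symm⟩,
      Finset.mem_range.2 (by dsimp only; omega)⟩, by dsimp only; omega⟩
  rw [gridCount]
  refine (Set.ncard_le_ncard hsub (Finset.finite_toSet _)).trans ?_
  rw [Set.ncard_coe_finset]
  refine Finset.card_image_le.trans ?_
  rw [Finset.card_product, Finset.card_range, mul_comm]

theorem cells_two_le {A : Set ℝ} (hA : A ⊆ Set.Icc 0 1) (Q n k : ℕ) (h : k ≤ Q * n) :
    (cells 2 k A).card ≤ (cells (2 ^ Q) n A).card := by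
  have hsub : cells 2 k A ⊆ (cells (2 ^ Q) n A).image (fun j => j / 2 ^ (Q * n - k)) := by
    intro i hi
    obtain ⟨x, xA, xi⟩ := (mem_cells hA).1 hi
    rw [Finset.mem_image]
    refine ⟨_, (mem_cells hA).2 ⟨x, xA, rfl⟩, ?_⟩
    rw [floor_anc (τ := Q * n - k) (by norm_num), Nat.add_sub_cancel' h] at xi
    rw [← xi]
    push_cast
    rw [pow_mul]
  exact (Finset.card_le_card hsub).trans Finset.card_image_le

theorem cells_card_le (M n : ℕ) (A : Set ℝ) : (cells M n A).card ≤ M ^ n + 1 := by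
  classical
  rw [cells]
  refine (Finset.card_filter_le _ _).trans ?_
  rw [Finset.card_range]

theorem ubDim_le {A : Set ℝ} {β c : ℝ}
    (h : ∀ k : ℕ, Real.log (gridCount 2 k A) ≤ c + β * k * Real.log 2) (β' : ℝ) (hβ : β < β') :
    ubDim A ≤ β' := by
  have hl : 0 < Real.log 2 := Real.log_pos (by norm_num)
  rw [ubDim]
  apply Filter.limsup_le_of_le
  · refine Filter.IsCoboundedUnder.of_frequently_ge (a := 0) (Frequently.of_forall fun k => ?_)
    apply div_nonneg (Real.log_natCast_nonneg _)
    positivity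
  · obtain ⟨k0, hk0⟩ := exists_nat_gt (c / ((β' - β) * Real.log 2))
    filter_upwards [eventually_ge_atTop (max k0 1)] with k hk
    have hk1 : (1 : ℝ) ≤ k := by exact_mod_cast (le_max_right _ _).trans hk
    have hk2 : (k0 : ℝ) ≤ k := by exact_mod_cast (le_max_left _ _).trans hk
    rw [div_le_iff₀ (by positivity)]
    refine (h k).trans ?_
    have hd : 0 < (β' - β) * Real.log 2 := mul_pos (by linarith) hl
    rw [div_lt_iff₀ hd] at hk0
    have : (k0 : ℝ) * ((β' - β) * Real.log 2) ≤ k * ((β' - β) * Real.log 2) := by gcongr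
    linarith

theorem ubDim_le_of_cvx {Q : ℕ} {t Λ C α : ℝ} {f : ℝ → ℝ} {A : Set ℝ} (hQ : 1 ≤ Q)
    (hα : 0 < α) (hta : t = ((2 ^ Q : ℕ) : ℝ) ^ (-α)) (hΛ : 0 ≤ Λ) (hC : 0 ≤ C)
    (hf : ∀ x y, |f x - f y| ≤ Λ * |x - y|) (hP : Prop1 (2 ^ Q) t Λ C f)
    (hA : A ⊆ Set.Icc 0 1) (hcv : Cvx f A) : ubDim A ≤ α := by
  have hM2 : 2 ≤ 2 ^ Q := by
    calc 2 = 2 ^ 1 := rfl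
      _ ≤ 2 ^ Q := Nat.pow_le_pow_right (by norm_num) hQ
  have hMr : (2 : ℝ) ≤ ((2 ^ Q : ℕ) : ℝ) := by exact_mod_cast hM2
  have ht : 0 < t := by rw [hta]; positivity
  have ht1 : t ≤ 1 := by
    rw [hta]; exact Real.rpow_le_one_of_one_le_of_nonpos (by linarith) (by linarith)
  apply le_of_forall_gt_imp_ge_of_dense
  intro β' hβ'
  set β := (α + β') / 2 with hβ
  have hβ0 : 0 < β := by linarith
  obtain ⟨D, hD1, hD⟩ := cells_growth (Λ := Λ) (C := C) (α := α) (β := β) hM2 hα (by linarith) hta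
    hΛ hC (fun n => ((cells (2 ^ Q) n A).card : ℝ))
    (fun n => by exact_mod_cast cells_card_le (2 ^ Q) n A)
    (fun l τ => cells_rec (by omega) ht ht1 hΛ hC hf hP hA hcv l τ)
  set R : ℝ := ((2 ^ Q : ℕ) : ℝ) ^ β with hR
  have hR1 : 1 ≤ R := Real.one_le_rpow (by linarith) hβ0.le
  refine ubDim_le (β := β) (c := Real.log (2 * D * R)) (fun k => ?_) β' (by linarith)
  have hl : 0 < Real.log 2 := Real.log_pos (by norm_num)
  have hlog0 : 0 ≤ Real.log (2 * D * R) := Real.log_nonneg (by nlinarith)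
  rcases Nat.eq_zero_or_pos (gridCount 2 k A) with h0 | h0
  · rw [h0, Nat.cast_zero, Real.log_zero]
    positivity
  have hlogR : Real.log R = β * (Q * Real.log 2) := by
    rw [hR, Real.log_rpow (by linarith)]
    push_cast
    rw [Real.log_pow]
  have hk : k ≤ Q * (k / Q + 1) := (Nat.lt_mul_div_succ k hQ).le
  have h1 := (gridCount_le hA k).trans (Nat.mul_le_mul_left 2 (cells_two_le hA Q _ k hk))
  have h2 : (gridCount 2 k A : ℝ) ≤ 2 * ((cells (2 ^ Q) (k / Q + 1) A).card : ℝ) := by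
    exact_mod_cast h1
  have h3 : (gridCount 2 k A : ℝ) ≤ 2 * D * R * R ^ (k / Q) := by
    have := hD (k / Q + 1)
    rw [pow_succ] at this
    nlinarith
  have h4 := Real.log_le_log (by exact_mod_cast h0) h3
  rw [Real.log_mul (by positivity) (by positivity), Real.log_pow, hlogR] at h4
  have h5 : (Q : ℝ) * ((k / Q : ℕ) : ℝ) ≤ k := by exact_mod_cast Nat.mul_div_le k Q
  have h6 : β * Real.log 2 * ((Q : ℝ) * ((k / Q : ℕ) : ℝ)) ≤ β * Real.log 2 * k := by gcongr
  linarith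

theorem cvx_of_restr {f : ℝ → ℝ} {A : Set ℝ} (h : ConvexRestr f A) : Cvx f A := by
  obtain ⟨k, hk, he⟩ := h
  intro x hx y hy z hz hxy hyz
  rw [he hx, he hy, he hz]
  exact hk.slope_mono_adjacent (subset_convexHull ℝ A hx) (subset_convexHull ℝ A hz) hxy hyz

theorem cvx_neg_of_restr {f : ℝ → ℝ} {A : Set ℝ} (h : ConcaveRestr f A) :
    Cvx (fun x => - f x) A := by
  obtain ⟨k, hk, he⟩ := h
  apply cvx_of_restr
  refine ⟨-k, hk.neg, fun x hx => ?_⟩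
  simp [he hx]

theorem Prop1.neg {M : ℕ} {t Λ C : ℝ} {f : ℝ → ℝ} (h : Prop1 M t Λ C f) :
    Prop1 M t Λ C (fun x => - f x) := by
  intro n m b hm s hs
  refine h n (-m) (-b) (by rwa [abs_neg]) s ?_
  intro j hj
  obtain ⟨x, x0, x1, xj, hv⟩ := hs j hj
  refine ⟨x, x0, x1, xj, ?_⟩
  rw [← abs_neg]
  convert hv using 2
  ring

end Rough

/-- For each `0 < α < 1` there is a differentiable `f` with `α`-Hölder derivative such
that `f` is neither convex nor concave on any `A ⊆ [0,1]` of upper box dimension `> α`. -/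
theorem stmt2 (α : ℝ) (hα : 0 < α ∧ α < 1) :
    ∃ f : ℝ → ℝ, Differentiable ℝ f ∧
      (∃ C : ℝ, ∀ x ∈ Set.Icc (0 : ℝ) 1, ∀ y ∈ Set.Icc (0 : ℝ) 1,
        |deriv f x - deriv f y| ≤ C * |x - y| ^ α) ∧
      ∀ A ⊆ Set.Icc (0 : ℝ) 1, ubDim A > α →
        ¬ ConvexRestr f A ∧ ¬ ConcaveRestr f A := by
  obtain ⟨ψ, ψ', B, hB⟩ := Rough.exists_Bump
  obtain ⟨hα0, hα1⟩ := hα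
  have hB1 := hB.one_le
  have hex : ∃ Q : ℕ, 1 ≤ Q ∧ 4 * (8 * B + 12) < ((2 ^ Q : ℕ) : ℝ) ^ α ∧
      2 ≤ ((2 ^ Q : ℕ) : ℝ) ^ (1 - α) := by
    have hM : Tendsto (fun Q : ℕ => ((2 ^ Q : ℕ) : ℝ)) atTop atTop := by
      push_cast
      exact tendsto_pow_atTop_atTop_of_one_lt (by norm_num)
    have h1 := ((tendsto_rpow_atTop hα0).comp hM).eventually_gt_atTop (4 * (8 * B + 12))
    have h2 := ((tendsto_rpow_atTop (by linarith : 0 < 1 - α)).comp hM).eventually_ge_atTop 2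
    obtain ⟨Q, a, b, c⟩ := ((eventually_ge_atTop 1).and (h1.and h2)).exists
    exact ⟨Q, a, b, c⟩
  obtain ⟨Q, hQ1, hQ2, hQ3⟩ := hex
  have hM2 : 2 ≤ 2 ^ Q := by
    calc 2 = 2 ^ 1 := rfl
      _ ≤ 2 ^ Q := Nat.pow_le_pow_right (by norm_num) hQ1
  have hMpos : (0 : ℝ) < ((2 ^ Q : ℕ) : ℝ) := by exact_mod_cast (by omega : 0 < 2 ^ Q)
  obtain ⟨t, hta⟩ : ∃ t : ℝ, t = ((2 ^ Q : ℕ) : ℝ) ^ (-α) := ⟨_, rfl⟩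
  have ht : 0 < t := by rw [hta]; positivity
  have htm : t * ((2 ^ Q : ℕ) : ℝ) ^ α = 1 := by
    rw [hta, ← Real.rpow_add hMpos]; simp
  have hsmall : 4 * (8 * B + 12) * t < 1 := by
    rw [← htm, mul_comm]
    gcongr
  have hpar : Rough.Par (2 ^ Q) t B := by
    refine ⟨hM2, ht, ?_, ?_, hB1, hsmall⟩
    · nlinarith
    · rw [hta]
      calc (2 : ℝ) ≤ ((2 ^ Q : ℕ) : ℝ) ^ (1 - α) := hQ3
        _ = ((2 ^ Q : ℕ) : ℝ) ^ (-α) * ((2 ^ Q : ℕ) : ℝ) ^ (1 : ℝ) := by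
          rw [← Real.rpow_add hMpos]; congr 1; ring
        _ = _ := by rw [Real.rpow_one]
  obtain ⟨f, g, C, hC, hder, hhol, hlip, hP⟩ := Rough.exists_f hB hpar α hα0 hα1 hta
  refine ⟨f, fun x => (hder x).differentiableAt, ⟨5 * B / t, fun x hx y hy => ?_⟩,
    fun A hA hdim => ⟨fun hc => ?_, fun hc => ?_⟩⟩
  · rw [(hder x).deriv, (hder y).deriv]
    exact hhol x hx y hy
  · have := Rough.ubDim_le_of_cvx hQ1 hα0 hta (by linarith) hC hlip hP hA (Rough.cvx_of_restr hc)
    linarith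
  · have := Rough.ubDim_le_of_cvx hQ1 hα0 hta (by linarith) hC (fun x y => by
      rw [← abs_neg]
      convert hlip x y using 2
      ring) hP.neg hA (Rough.cvx_neg_of_restr hc)
    linarith
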